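/- Let n ≥ 7 and let u : ℝⁿ → ℝ be a smooth solution of the triharmonic Lane–Emden equation (−Δ)³u = |u|^{p−1}u that is stable outside some compact set Θ ⊂ ℝⁿ. If 1 < p < (n+6)/(n−6), then u is identically zero. -/

import Mathlib

open MeasureTheory Filter

noncomputable section

/-- The Euclidean Laplacian of `u` at `x`. -/
def laplacian {n : ℕ} (u : EuclideanSpace ℝ (Fin n) → ℝ) (x : EuclideanSpace ℝ (Fin n)) : ℝ :=
  ∑ i : Fin n, iteratedFDeriv ℝ 2 u x ![EuclideanSpace.single i 1, EuclideanSpace.single i 1]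

namespace Triharm

abbrev EE (n : ℕ) := EuclideanSpace ℝ (Fin n)

variable {n : ℕ}

/-- smoothness -/
abbrev Sm (f : EE n → ℝ) : Prop := ContDiff ℝ (⊤ : ℕ∞) f

/-- partial derivative -/
def pd (i : Fin n) (f : EE n → ℝ) (x : EE n) : ℝ := fderiv ℝ f x (EuclideanSpace.single i 1)

lemma Sm.diff {f : EE n → ℝ} (hf : Sm f) : Differentiable ℝ f :=
  hf.differentiable (by simp)

lemma Sm.pd {f : EE n → ℝ} (hf : Sm f) (i : Fin n) : Sm (pd i f) := by
  have h1 : ContDiff ℝ (⊤ : ℕ∞) (fderiv ℝ f) := hf.fderiv_right (by simp)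
  exact h1.clm_apply contDiff_const

lemma Sm.mul {f g : EE n → ℝ} (hf : Sm f) (hg : Sm g) : Sm (fun x => f x * g x) :=
  ContDiff.mul hf hg

lemma Sm.add {f g : EE n → ℝ} (hf : Sm f) (hg : Sm g) : Sm (fun x => f x + g x) :=
  ContDiff.add hf hg

lemma Sm.cont {f : EE n → ℝ} (hf : Sm f) : Continuous f := hf.continuous

lemma pd_mul {f g : EE n → ℝ} (hf : Differentiable ℝ f) (hg : Differentiable ℝ g) (i : Fin n) :
    pd i (fun x => f x * g x) = fun x => pd i f x * g x + f x * pd i g x := by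
  funext x
  simp only [pd]
  rw [fderiv_fun_mul (hf x) (hg x)]
  simp
  ring

lemma pd_add {f g : EE n → ℝ} (hf : Differentiable ℝ f) (hg : Differentiable ℝ g) (i : Fin n) :
    pd i (fun x => f x + g x) = fun x => pd i f x + pd i g x := by
  funext x
  simp only [pd]
  rw [fderiv_fun_add (hf x) (hg x)]
  simp

lemma pd_sum {ι : Type*} (s : Finset ι) {f : ι → EE n → ℝ} (hf : ∀ j ∈ s, Differentiable ℝ (f j))
    (i : Fin n) : pd i (fun x => ∑ j ∈ s, f j x) = fun x => ∑ j ∈ s, pd i (f j) x := by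
  funext x
  simp only [pd]
  rw [fderiv_fun_sum (fun j hj => hf j hj x)]
  simp

lemma pd_pd {f : EE n → ℝ} (hf : Sm f) (i j : Fin n) (x : EE n) :
    pd j (pd i f) x = fderiv ℝ (fderiv ℝ f) x (EuclideanSpace.single j 1)
      (EuclideanSpace.single i 1) := by
  have h1 : ContDiff ℝ (⊤ : ℕ∞) (fderiv ℝ f) := hf.fderiv_right (by simp)
  have h2 : Differentiable ℝ (fderiv ℝ f) := h1.differentiable (by simp)
  show fderiv ℝ (fun y => fderiv ℝ f y (EuclideanSpace.single i 1)) x _ = _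
  rw [fderiv_clm_apply (h2 x) (differentiableAt_const _)]
  simp

lemma pd_comm {f : EE n → ℝ} (hf : Sm f) (i j : Fin n) : pd j (pd i f) = pd i (pd j f) := by
  funext x
  rw [pd_pd hf, pd_pd hf]
  have h : IsSymmSndFDerivAt ℝ f x := hf.contDiffAt.isSymmSndFDerivAt (by
    rw [minSmoothness_of_isRCLikeNormedField]; exact WithTop.coe_le_coe.2 (le_top : (2 : ℕ∞) ≤ ⊤))
  exact h _ _

lemma laplacian_eq {f : EE n → ℝ} (hf : Sm f) :
    laplacian f = fun x => ∑ i, pd i (pd i f) x := by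
  funext x
  unfold laplacian
  refine Finset.sum_congr rfl fun i _ => ?_
  rw [pd_pd hf, iteratedFDeriv_two_apply]
  simp

lemma Sm.sum {ι : Type*} {s : Finset ι} {f : ι → EE n → ℝ} (hf : ∀ j ∈ s, Sm (f j)) :
    Sm (fun x => ∑ j ∈ s, f j x) := ContDiff.sum hf

lemma Sm.lap {f : EE n → ℝ} (hf : Sm f) : Sm (laplacian f) := by
  rw [laplacian_eq hf]
  exact Sm.sum fun i _ => (hf.pd i).pd i

lemma pd_lap {f : EE n → ℝ} (hf : Sm f) (i : Fin n) :
    pd i (laplacian f) = laplacian (pd i f) := by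
  rw [laplacian_eq hf, laplacian_eq (hf.pd i), pd_sum _ (fun j _ => ((hf.pd j).pd j).diff)]
  funext x
  refine Finset.sum_congr rfl fun j _ => ?_
  rw [pd_comm (hf.pd j) j i, pd_comm hf j i]

lemma norm_gradient_sq (f : EE n → ℝ) (x : EE n) :
    ‖gradient f x‖ ^ 2 = ∑ i, (pd i f x) ^ 2 := by
  rw [EuclideanSpace.real_norm_sq_eq]
  refine Finset.sum_congr rfl fun i _ => ?_
  congr 1
  have : inner ℝ (gradient f x) (EuclideanSpace.single i (1:ℝ)) = pd i f x := by
    unfold gradient pd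
    rw [InnerProductSpace.toDual_symm_apply]
  rw [← this, EuclideanSpace.inner_single_right]
  simp

lemma cs_pd {f : EE n → ℝ} (hf : HasCompactSupport f) (i : Fin n) : HasCompactSupport (pd i f) :=
  hf.fderiv_apply ℝ _

lemma cont_pd {f : EE n → ℝ} (hf : ContDiff ℝ 1 f) (i : Fin n) : Continuous (pd i f) :=
  (hf.continuous_fderiv (by simp)).clm_apply continuous_const

lemma int_cs {f : EE n → ℝ} (hf : Continuous f) (h : HasCompactSupport f) : Integrable f :=
  hf.integrable_of_hasCompactSupport h

lemma ibp {f g : EE n → ℝ} (hf : ContDiff ℝ 1 f) (hg : ContDiff ℝ 1 g) (hc : HasCompactSupport g)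
    (i : Fin n) : ∫ x, pd i f x * g x = - ∫ x, f x * pd i g x := by
  have := integral_mul_fderiv_eq_neg_fderiv_mul_of_integrable (μ := volume) (f := f) (g := g)
    (v := EuclideanSpace.single i (1:ℝ)) (𝕜 := ℝ)
    (int_cs ((cont_pd hf i).mul hg.continuous) hc.mul_left)
    (int_cs (hf.continuous.mul (cont_pd hg i)) (cs_pd hc i).mul_left)
    (int_cs (hf.continuous.mul hg.continuous) hc.mul_left)
    (fun x _ => hf.differentiable (by simp) x) (fun x _ => hg.differentiable (by simp) x)
  simp only [pd]
  rw [this]; simp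

lemma Sm.one {f : EE n → ℝ} (hf : Sm f) : ContDiff ℝ 1 f := hf.of_le (by exact_mod_cast le_top)

lemma lap_ibp {v g : EE n → ℝ} (hv : Sm v) (hg : Sm g) (hc : HasCompactSupport g) :
    ∫ x, laplacian v x * g x = - ∑ i, ∫ x, pd i v x * pd i g x := by
  rw [laplacian_eq hv]
  simp only [Finset.sum_mul]
  rw [integral_finsetSum]
  · rw [← Finset.sum_neg_distrib]
    refine Finset.sum_congr rfl fun i _ => ?_
    exact ibp (hv.pd i).one hg.one hc i
  · intro i _
    exact int_cs (((hv.pd i).pd i).cont.mul hg.cont) hc.mul_left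

/-- third derivative -/
abbrev p3 (i j k : Fin n) (f : EE n → ℝ) : EE n → ℝ := pd k (pd j (pd i f))

lemma Sm.p3 {f : EE n → ℝ} (hf : Sm f) (i j k : Fin n) : Sm (p3 i j k f) :=
  ((hf.pd i).pd j).pd k

lemma tri_ibp {u g : EE n → ℝ} (hu : Sm u) (hg : Sm g) (hc : HasCompactSupport g) :
    ∫ x, laplacian (laplacian (laplacian u)) x * g x
      = - ∑ i, ∑ j, ∑ k, ∫ x, p3 i j k u x * p3 i j k g x := by
  rw [lap_ibp hu.lap.lap hg hc]
  congr 1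
  refine Finset.sum_congr rfl fun i _ => ?_
  rw [pd_lap hu.lap, pd_lap hu, lap_ibp (hu.pd i).lap (hg.pd i) (cs_pd hc i),
    ← Finset.sum_neg_distrib]
  refine Finset.sum_congr rfl fun j _ => ?_
  rw [pd_lap (hu.pd i), lap_ibp ((hu.pd i).pd j) ((hg.pd i).pd j) (cs_pd (cs_pd hc i) j), neg_neg]

lemma cs_lap {f : EE n → ℝ} (hs : Sm f) (hf : HasCompactSupport f) :
    HasCompactSupport (laplacian f) := by
  rw [laplacian_eq hs]
  have : ∀ s : Finset (Fin n), HasCompactSupport (fun x => ∑ i ∈ s, pd i (pd i f) x) := by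
    intro s
    induction s using Finset.induction_on with
    | empty => simp only [Finset.sum_empty]; exact (HasCompactSupport.zero (α := EE n) (β := ℝ))
    | insert a s ha ih =>
      simp only [Finset.sum_insert ha]
      exact (cs_pd (cs_pd hf a) a).add ih
  exact this _

lemma grad_lap_ibp {f : EE n → ℝ} (hf : Sm f) (hc : HasCompactSupport f) :
    ∫ x, ‖gradient (laplacian f) x‖ ^ 2
      = ∑ i, ∑ j, ∑ k, ∫ x, (p3 i j k f x) ^ 2 := by
  simp only [norm_gradient_sq]
  rw [integral_finsetSum]
  swap
  · intro i _
    refine int_cs ((hf.lap.pd i).cont.pow 2) ?_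
    simp only [pow_two]
    exact (cs_pd (cs_lap hf hc) i).mul_left
  refine Finset.sum_congr rfl fun i _ => ?_
  rw [pd_lap hf]
  simp only [pow_two]
  rw [lap_ibp (hf.pd i) (hf.pd i).lap (cs_lap (hf.pd i) (cs_pd hc i)), ← Finset.sum_neg_distrib]
  refine Finset.sum_congr rfl fun j _ => ?_
  rw [pd_lap (hf.pd i)]
  simp only [mul_comm (pd j (pd i f) _)]
  rw [lap_ibp ((hf.pd i).pd j) ((hf.pd i).pd j) (cs_pd (cs_pd hc i) j), neg_neg]

/-- Leibniz commutator -/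
lemma leibniz3 {f g : EE n → ℝ} (hf : Sm f) (hg : Sm g) (i j k : Fin n) (x : EE n) :
    p3 i j k (fun x => f x * g x) x = p3 i j k f x * g x +
      (pd j (pd i f) x * pd k g x + pd k (pd i f) x * pd j g x + pd k (pd j f) x * pd i g x
      + pd i f x * pd k (pd j g) x + pd j f x * pd k (pd i g) x + pd k f x * pd j (pd i g) x
      + f x * p3 i j k g x) := by
  unfold p3
  have a1 := hf.pd i
  have a2 := hg.pd i
  rw [pd_mul hf.diff hg.diff,
    pd_add (a1.mul hg).diff (hf.mul a2).diff, pd_mul a1.diff hg.diff, pd_mul hf.diff a2.diff]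
  have e1 : Sm (fun x => pd j (pd i f) x * g x) := (a1.pd j).mul hg
  have e2 : Sm (fun x => pd i f x * pd j g x) := a1.mul (hg.pd j)
  have e3 : Sm (fun x => pd j f x * pd i g x) := (hf.pd j).mul a2
  have e4 : Sm (fun x => f x * pd j (pd i g) x) := hf.mul (a2.pd j)
  rw [pd_add (e1.add e2).diff (e3.add e4).diff, pd_add e1.diff e2.diff, pd_add e3.diff e4.diff,
    pd_mul (a1.pd j).diff hg.diff, pd_mul a1.diff (hg.pd j).diff, pd_mul (hf.pd j).diff a2.diff,
    pd_mul hf.diff (a2.pd j).diff]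
  ring

lemma leibniz3_bound {f g : EE n → ℝ} (hf : Sm f) (hg : Sm g) (i j k : Fin n) (x : EE n)
    {s0 s1 s2 g1 g2 g3 : ℝ} (h0 : |f x| ≤ s0) (h1 : ∀ i, |pd i f x| ≤ s1)
    (h2 : ∀ i j, |pd j (pd i f) x| ≤ s2) (k1 : ∀ i, |pd i g x| ≤ g1)
    (k2 : ∀ i j, |pd j (pd i g) x| ≤ g2) (k3 : ∀ i j k, |p3 i j k g x| ≤ g3) :
    |p3 i j k (fun x => f x * g x) x - p3 i j k f x * g x|
      ≤ 3 * s2 * g1 + 3 * s1 * g2 + s0 * g3 := by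
  rw [leibniz3 hf hg, add_sub_cancel_left]
  have key : ∀ {a b A B : ℝ}, |a| ≤ A → |b| ≤ B → |a * b| ≤ A * B := by
    intro a b A B h h'
    rw [abs_mul]
    exact mul_le_mul h h' (abs_nonneg _) ((abs_nonneg _).trans h)
  have b1 := abs_le.1 (key (h2 i j) (k1 k))
  have b2 := abs_le.1 (key (h2 i k) (k1 j))
  have b3 := abs_le.1 (key (h2 j k) (k1 i))
  have b4 := abs_le.1 (key (h1 i) (k2 j k))
  have b5 := abs_le.1 (key (h1 j) (k2 i k))
  have b6 := abs_le.1 (key (h1 k) (k2 i j))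
  have b7 := abs_le.1 (key h0 (k3 i j k))
  rw [abs_le]
  constructor <;> linarith [b1.1, b1.2, b2.1, b2.2, b3.1, b3.2, b4.1, b4.2, b5.1, b5.2, b6.1, b6.2,
    b7.1, b7.2]

/-- sum of squares of first derivatives -/
def S1 (f : EE n → ℝ) (x : EE n) : ℝ := ∑ i, (pd i f x) ^ 2
/-- sum of squares of second derivatives -/
def S2 (f : EE n → ℝ) (x : EE n) : ℝ := ∑ i, S1 (pd i f) x
/-- sum of squares of third derivatives -/
def S3 (f : EE n → ℝ) (x : EE n) : ℝ := ∑ i, S2 (pd i f) x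

lemma S1_nonneg (f : EE n → ℝ) (x : EE n) : 0 ≤ S1 f x := Finset.sum_nonneg fun _ _ => sq_nonneg _
lemma S2_nonneg (f : EE n → ℝ) (x : EE n) : 0 ≤ S2 f x :=
  Finset.sum_nonneg fun _ _ => S1_nonneg _ _
lemma S3_nonneg (f : EE n → ℝ) (x : EE n) : 0 ≤ S3 f x :=
  Finset.sum_nonneg fun _ _ => S2_nonneg _ _

lemma S1_cont {f : EE n → ℝ} (hf : Sm f) : Continuous (S1 f) :=
  continuous_finsetSum _ fun i _ => (hf.pd i).cont.pow 2
lemma S2_cont {f : EE n → ℝ} (hf : Sm f) : Continuous (S2 f) :=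
  continuous_finsetSum _ fun i _ => S1_cont (hf.pd i)
lemma S3_cont {f : EE n → ℝ} (hf : Sm f) : Continuous (S3 f) :=
  continuous_finsetSum _ fun i _ => S2_cont (hf.pd i)

lemma sq_le_S1 (f : EE n → ℝ) (x : EE n) (i : Fin n) : (pd i f x) ^ 2 ≤ S1 f x :=
  Finset.single_le_sum (f := fun i => (pd i f x) ^ 2) (fun _ _ => sq_nonneg _) (Finset.mem_univ i)
lemma S1_le_S2 (f : EE n → ℝ) (x : EE n) (i : Fin n) : S1 (pd i f) x ≤ S2 f x :=
  Finset.single_le_sum (f := fun i => S1 (pd i f) x) (fun _ _ => S1_nonneg _ _) (Finset.mem_univ i)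
lemma S2_le_S3 (f : EE n → ℝ) (x : EE n) (i : Fin n) : S2 (pd i f) x ≤ S3 f x :=
  Finset.single_le_sum (f := fun i => S2 (pd i f) x) (fun _ _ => S2_nonneg _ _) (Finset.mem_univ i)

lemma abs_pd_le (f : EE n → ℝ) (x : EE n) (i : Fin n) : |pd i f x| ≤ √(S1 f x) :=
  Real.abs_le_sqrt (sq_le_S1 f x i)
lemma abs_pd2_le (f : EE n → ℝ) (x : EE n) (i j : Fin n) : |pd j (pd i f) x| ≤ √(S2 f x) :=
  Real.abs_le_sqrt ((sq_le_S1 _ x j).trans (S1_le_S2 f x i))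
lemma abs_pd3_le (f : EE n → ℝ) (x : EE n) (i j k : Fin n) : |p3 i j k f x| ≤ √(S3 f x) :=
  Real.abs_le_sqrt (((sq_le_S1 _ x k).trans (S1_le_S2 _ x j)).trans (S2_le_S3 f x i))

lemma S3_eq (f : EE n → ℝ) (x : EE n) : S3 f x = ∑ i, ∑ j, ∑ k, (p3 i j k f x) ^ 2 := rfl

/-- locality -/
lemma pd_congr {f g : EE n → ℝ} {x : EE n} (h : f =ᶠ[nhds x] g) (i : Fin n) :
    pd i f =ᶠ[nhds x] pd i g := by
  have := h.fderiv (𝕜 := ℝ)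
  filter_upwards [this] with y hy
  simp only [pd, hy]

lemma p3_congr {f g : EE n → ℝ} {x : EE n} (h : f =ᶠ[nhds x] g) (i j k : Fin n) :
    p3 i j k f x = p3 i j k g x :=
  (pd_congr (pd_congr (pd_congr h i) j) k).eq_of_nhds

lemma S3_congr {f g : EE n → ℝ} {x : EE n} (h : f =ᶠ[nhds x] g) : S3 f x = S3 g x := by
  simp only [S3_eq, p3_congr h]

/-- base cutoff -/
def eta (n : ℕ) : ContDiffBump (0 : EE n) := ⟨1, 2, one_pos, one_lt_two⟩

/-- scaled cutoff -/
def cut (ρ : ℝ) (x : EE n) : ℝ := eta n (ρ • x)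

lemma eta_sm : Sm (eta n : EE n → ℝ) := (eta n).contDiff

lemma cut_sm (ρ : ℝ) : Sm (cut ρ : EE n → ℝ) :=
  eta_sm.comp (contDiff_const_smul ρ)

lemma cut_pow_sm (ρ : ℝ) (N : ℕ) : Sm (fun x : EE n => cut ρ x ^ N) := (cut_sm ρ).pow N

lemma cut_nonneg (ρ : ℝ) (x : EE n) : 0 ≤ cut ρ x := (eta n).nonneg
lemma cut_le_one (ρ : ℝ) (x : EE n) : cut ρ x ≤ 1 := (eta n).le_one

lemma cut_eq_one {ρ : ℝ} (hρ : 0 < ρ) {x : EE n} (h : ρ * ‖x‖ ≤ 1) : cut ρ x = 1 := by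
  apply (eta n).one_of_mem_closedBall
  simp [norm_smul, abs_of_pos hρ]
  exact h

lemma eta_eq_zero {x : EE n} (h : 2 ≤ ‖x‖) : eta n x = 0 := by
  apply (eta n).zero_of_le_dist
  show (2 : ℝ) ≤ dist x 0
  simpa using h

lemma cut_eq_zero {ρ : ℝ} (hρ : 0 < ρ) {x : EE n} (h : 2 ≤ ρ * ‖x‖) : cut ρ x = 0 := by
  apply eta_eq_zero
  simpa [norm_smul, abs_of_pos hρ] using h

lemma cut_cs {ρ : ℝ} (hρ : 0 < ρ) : HasCompactSupport (cut ρ : EE n → ℝ) := by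
  refine HasCompactSupport.intro (isCompact_closedBall (0 : EE n) (2 / ρ)) fun x hx => ?_
  apply cut_eq_zero hρ
  have : 2 / ρ < ‖x‖ := by simpa using hx
  rw [div_lt_iff₀ hρ] at this
  linarith

lemma cut_pow_cs {ρ : ℝ} (hρ : 0 < ρ) {N : ℕ} (hN : 1 ≤ N) :
    HasCompactSupport (fun x : EE n => cut ρ x ^ N) := by
  obtain ⟨M, rfl⟩ : ∃ M, N = M + 1 := ⟨N - 1, by omega⟩
  simp only [pow_succ]
  exact (cut_cs hρ).mul_left

lemma int_cut {ρ : ℝ} (hρ : 0 < ρ) {N : ℕ} (hN : 1 ≤ N) {f : EE n → ℝ} (hf : Continuous f) :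
    Integrable (fun x : EE n => f x * cut ρ x ^ N) :=
  int_cs (hf.mul (cut_pow_sm ρ N).cont) (cut_pow_cs hρ hN).mul_left

lemma pd_scale (f : EE n → ℝ) (ρ : ℝ) (i : Fin n) :
    pd i (fun x => f (ρ • x)) = fun x => ρ * pd i f (ρ • x) := by
  funext x
  unfold pd
  have := fderiv_comp_smul (𝕜 := ℝ) (f := f) (x := x) ρ
  rw [this]
  simp

lemma pd_const_mul (c : ℝ) (f : EE n → ℝ) (i : Fin n) (hf : Differentiable ℝ f) :
    pd i (fun x => c * f x) = fun x => c * pd i f x := by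
  funext x
  unfold pd
  rw [fderiv_const_mul (hf x)]
  simp

lemma Sm.scale {f : EE n → ℝ} (hf : Sm f) (ρ : ℝ) : Sm (fun x => f (ρ • x)) :=
  hf.comp (contDiff_const_smul ρ)

lemma Sm.cmul {f : EE n → ℝ} (hf : Sm f) (ρ : ℝ) : Sm (fun x => ρ * f x) :=
  contDiff_const.mul hf

lemma pd2_scale {f : EE n → ℝ} (hf : Sm f) (ρ : ℝ) (i j : Fin n) :
    pd j (pd i (fun x => f (ρ • x))) = fun x => ρ ^ 2 * pd j (pd i f) (ρ • x) := by
  rw [pd_scale, pd_const_mul _ _ _ ((hf.pd i).scale ρ).diff, pd_scale]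
  funext x; ring

lemma pd3_scale {f : EE n → ℝ} (hf : Sm f) (ρ : ℝ) (i j k : Fin n) :
    p3 i j k (fun x => f (ρ • x)) = fun x => ρ ^ 3 * p3 i j k f (ρ • x) := by
  unfold p3
  rw [pd2_scale hf, pd_const_mul _ _ _ (((hf.pd i).pd j).scale ρ).diff, pd_scale]
  funext x; ring

/-- functions divisible by a power of the cutoff -/
def IsF (a : ℕ) (f : EE n → ℝ) : Prop := ∃ g : EE n → ℝ, Sm g ∧ f = fun x => eta n x ^ a * g x

lemma IsF.pd {a : ℕ} {f : EE n → ℝ} (h : IsF (a + 1) f) (i : Fin n) : IsF a (pd i f) := by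
  obtain ⟨g, hg, rfl⟩ := h
  have hp : ∀ a : ℕ, Sm (fun x : EE n => eta n x ^ a) := fun a => eta_sm.pow a
  refine ⟨fun x => (a + 1 : ℝ) * (Triharm.pd i (eta n) x * g x) + eta n x * Triharm.pd i g x,
    (((eta_sm.pd i).mul hg).cmul _).add (eta_sm.mul (hg.pd i)), ?_⟩
  rw [pd_mul (hp _).diff hg.diff]
  funext x
  have : Triharm.pd i (fun x : EE n => eta n x ^ (a + 1)) x
      = (a + 1 : ℝ) * eta n x ^ a * Triharm.pd i (eta n) x := by
    unfold Triharm.pd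
    rw [fderiv_fun_pow _ (eta_sm.diff x)]
    simp
  rw [this]
  ring

lemma IsF.bound {a : ℕ} (ha : 1 ≤ a) {f : EE n → ℝ} (h : IsF a f) :
    ∃ M : ℝ, 0 ≤ M ∧ ∀ x, |f x| ≤ M * eta n x ^ a := by
  obtain ⟨g, hg, rfl⟩ := h
  obtain ⟨C, hC⟩ := (isCompact_closedBall (0 : EE n) 2).exists_bound_of_continuousOn
    hg.cont.continuousOn
  refine ⟨|C|, abs_nonneg _, fun x => ?_⟩
  have h0 : 0 ≤ eta n x ^ a := pow_nonneg (eta n).nonneg _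
  by_cases hx : ‖x‖ ≤ 2
  · rw [abs_mul, abs_of_nonneg h0, mul_comm]
    refine mul_le_mul_of_nonneg_right ?_ h0
    have := hC x (by simpa using hx)
    rw [Real.norm_eq_abs] at this
    exact this.trans (le_abs_self C)
  · have : eta n x = 0 := eta_eq_zero (not_le.1 hx).le
    simp [this, show a ≠ 0 by omega]

lemma cut_bounds (n : ℕ) (d : ℕ) (hd : 1 ≤ d) : ∃ M : ℝ, 0 ≤ M ∧ ∀ ρ : ℝ, 0 < ρ → ∀ x : EE n,
    (∀ i, |pd i (fun x : EE n => cut ρ x ^ (d + 3)) x| ≤ M * ρ * cut ρ x ^ (d + 2)) ∧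
    (∀ i j, |pd j (pd i (fun x : EE n => cut ρ x ^ (d + 3))) x| ≤ M * ρ ^ 2 * cut ρ x ^ (d + 1)) ∧
    (∀ i j k, |p3 i j k (fun x : EE n => cut ρ x ^ (d + 3)) x| ≤ M * ρ ^ 3 * cut ρ x ^ d) := by
  have h0 : IsF (d + 3) (fun x : EE n => eta n x ^ (d + 3)) :=
    ⟨fun _ => 1, contDiff_const, by simp⟩
  have h1 := fun i => (h0.pd i).bound (by omega)
  have h2 := fun i j => ((h0.pd i).pd j).bound (by omega)
  have h3 := fun i j k => (((h0.pd i).pd j).pd k).bound hd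
  choose M1 hM1 h1 using h1
  choose M2 hM2 h2 using h2
  choose M3 hM3 h3 using h3
  have s1 : 0 ≤ ∑ i, M1 i := Finset.sum_nonneg fun i _ => hM1 i
  have s2 : 0 ≤ ∑ q : Fin n × Fin n, M2 q.1 q.2 := Finset.sum_nonneg fun i _ => hM2 _ _
  have s3 : 0 ≤ ∑ q : Fin n × Fin n × Fin n, M3 q.1 q.2.1 q.2.2 :=
    Finset.sum_nonneg fun i _ => hM3 _ _ _
  have hsm : Sm (fun x : EE n => eta n x ^ (d + 3)) := eta_sm.pow _
  refine ⟨∑ i, M1 i + ∑ q : Fin n × Fin n, M2 q.1 q.2 +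
    ∑ q : Fin n × Fin n × Fin n, M3 q.1 q.2.1 q.2.2, by positivity, fun ρ hρ x => ⟨?_, ?_, ?_⟩⟩
  · intro i
    have := pd_scale (fun x : EE n => eta n x ^ (d + 3)) ρ i
    unfold cut
    rw [this]
    have e := h1 i (ρ • x)
    have e' := Finset.single_le_sum (f := M1) (fun j _ => hM1 j) (Finset.mem_univ i)
    have e0 : 0 ≤ eta n (ρ • x) ^ (d + 2) := pow_nonneg (eta n).nonneg _
    rw [abs_mul, abs_of_pos hρ, mul_comm _ ρ, mul_assoc]
    gcongr
    refine e.trans ?_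
    gcongr
    linarith
  · intro i j
    have := pd2_scale hsm ρ i j
    unfold cut
    rw [this]
    have e := h2 i j (ρ • x)
    have e' := Finset.single_le_sum (f := fun q : Fin n × Fin n => M2 q.1 q.2)
      (fun j _ => hM2 _ _) (Finset.mem_univ (i, j))
    have e0 : 0 ≤ eta n (ρ • x) ^ (d + 1) := pow_nonneg (eta n).nonneg _
    rw [abs_mul, abs_of_pos (pow_pos hρ 2), mul_comm _ (ρ ^ 2), mul_assoc]
    gcongr
    refine e.trans ?_
    gcongr
    simp only at e'
    linarith
  · intro i j k
    have := pd3_scale hsm ρ i j k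
    unfold cut
    rw [this]
    have e := h3 i j k (ρ • x)
    have e' := Finset.single_le_sum (f := fun q : Fin n × Fin n × Fin n => M3 q.1 q.2.1 q.2.2)
      (fun j _ => hM3 _ _ _) (Finset.mem_univ (i, j, k))
    have e0 : 0 ≤ eta n (ρ • x) ^ d := pow_nonneg (eta n).nonneg _
    rw [abs_mul, abs_of_pos (pow_pos hρ 3), mul_comm _ (ρ ^ 3), mul_assoc]
    gcongr
    refine e.trans ?_
    gcongr
    simp only at e'
    linarith

lemma int_lin2 {f g : EE n → ℝ} (hf : Integrable f) (hg : Integrable g) (a b : ℝ) :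
    Integrable (fun x => a * f x + b * g x) ∧
    ∫ x, a * f x + b * g x = a * (∫ x, f x) + b * ∫ x, g x := by
  refine ⟨(hf.const_mul a).add (hg.const_mul b), ?_⟩
  rw [integral_add (hf.const_mul a) (hg.const_mul b), integral_const_mul, integral_const_mul]

lemma int_lin3 {f g h : EE n → ℝ} (hf : Integrable f) (hg : Integrable g) (hh : Integrable h)
    (a b c : ℝ) : Integrable (fun x => a * f x + b * g x + c * h x) ∧
    ∫ x, a * f x + b * g x + c * h x = a * (∫ x, f x) + b * (∫ x, g x) + c * ∫ x, h x := by
  have h1 := int_lin2 hf hg a b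
  refine ⟨h1.1.add (hh.const_mul c), ?_⟩
  rw [integral_add h1.1 (hh.const_mul c), integral_const_mul, h1.2]

lemma int_lin4 {f g h k : EE n → ℝ} (hf : Integrable f) (hg : Integrable g) (hh : Integrable h)
    (hk : Integrable k)
    (a b c d : ℝ) : Integrable (fun x => a * f x + b * g x + c * h x + d * k x) ∧
    ∫ x, a * f x + b * g x + c * h x + d * k x
      = a * (∫ x, f x) + b * (∫ x, g x) + c * (∫ x, h x) + d * ∫ x, k x := by
  have h1 := int_lin3 hf hg hh a b c
  refine ⟨h1.1.add (hk.const_mul d), ?_⟩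
  rw [integral_add h1.1 (hk.const_mul d), integral_const_mul, h1.2]

lemma interp (n s : ℕ) (hs : 1 ≤ s) (δ : ℝ) (hδ : 0 < δ) : ∃ C : ℝ, 0 ≤ C ∧
    ∀ v : EE n → ℝ, Sm v → ∀ ρ : ℝ, 0 < ρ →
    ρ ^ 2 * ∫ x, S1 v x * cut ρ x ^ (2 * s + 2) ≤
      δ * (∫ x, S2 v x * cut ρ x ^ (2 * s + 4)) + C * (ρ ^ 4 * ∫ x, v x ^ 2 * cut ρ x ^ (2 * s)) := by
  obtain ⟨M, hM, hb⟩ := cut_bounds n (2 * s - 1) (by omega)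
  rw [show 2 * s - 1 + 3 = 2 * s + 2 by omega, show 2 * s - 1 + 2 = 2 * s + 1 by omega] at hb
  set K : ℝ := 1 / (2 * δ) + M ^ 2 / 2 with hK
  have hK0 : 0 ≤ K := by positivity
  refine ⟨n * (2 * K), by positivity, fun v hv ρ hρ => ?_⟩
  have main : ∀ i : Fin n, ρ ^ 2 * ∫ x, (pd i v x) ^ 2 * cut ρ x ^ (2 * s + 2) ≤
      δ * (∫ x, S1 (pd i v) x * cut ρ x ^ (2 * s + 4))
        + 2 * K * (ρ ^ 4 * ∫ x, v x ^ 2 * cut ρ x ^ (2 * s)) := by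
    intro i
    have hi := hv.pd i
    have i1 : Integrable (fun x => (pd i v x) ^ 2 * cut ρ x ^ (2 * s + 2)) :=
      int_cut hρ (by omega) (hi.cont.pow 2)
    have i2 : Integrable (fun x => S1 (pd i v) x * cut ρ x ^ (2 * s + 4)) :=
      int_cut hρ (by omega) (S1_cont hi)
    have i3 : Integrable (fun x => v x ^ 2 * cut ρ x ^ (2 * s)) :=
      int_cut hρ (by omega) (hv.cont.pow 2)
    have hw := cut_pow_sm (n := n) ρ (2 * s + 2)
    have hwc : HasCompactSupport (fun x : EE n => cut ρ x ^ (2 * s + 2)) :=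
      cut_pow_cs hρ (by omega)
    have hg : Sm (fun x => pd i v x * cut ρ x ^ (2 * s + 2)) := hi.mul hw
    have hgc : HasCompactSupport (fun x => pd i v x * cut ρ x ^ (2 * s + 2)) := hwc.mul_left
    have e := ibp hv.one hg.one hgc i
    have e1 : ∫ x, (pd i v x) ^ 2 * cut ρ x ^ (2 * s + 2)
        = ∫ x, pd i v x * (pd i v x * cut ρ x ^ (2 * s + 2)) := by
      congr 1; funext x; ring
    have i4 : Integrable (fun x => v x * pd i (fun x => pd i v x * cut ρ x ^ (2 * s + 2)) x) :=
      int_cs (hv.cont.mul (hg.pd i).cont) (cs_pd hgc i).mul_left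
    have i5 := int_lin3 i2 i1 i3 (δ / 2) (ρ ^ 2 / 2) (K * ρ ^ 4)
    have mono : ∫ x, ρ ^ 2 * -(v x * pd i (fun x => pd i v x * cut ρ x ^ (2 * s + 2)) x) ≤
        ∫ x, δ / 2 * (S1 (pd i v) x * cut ρ x ^ (2 * s + 4)) +
          ρ ^ 2 / 2 * ((pd i v x) ^ 2 * cut ρ x ^ (2 * s + 2)) +
          K * ρ ^ 4 * (v x ^ 2 * cut ρ x ^ (2 * s)) := by
      refine integral_mono (i4.neg.const_mul (ρ ^ 2)) i5.1 fun x => ?_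
      simp only [pd_mul hi.diff hw.diff]
      have q1 := (hb ρ hρ x).1 i
      have q2 := sq_le_S1 (pd i v) x i
      set w1 := pd i (fun x : EE n => cut ρ x ^ (2 * s + 2)) x
      set c := cut ρ x
      set a := v x
      set b := pd i v x
      set d := pd i (pd i v) x
      have hc : 0 ≤ c := cut_nonneg ρ x
      -- two Young inequalities
      have y1 : ρ ^ 2 * -(a * (d * c ^ (2 * s + 2))) ≤
          δ / 2 * (d ^ 2 * c ^ (2 * s + 4)) + 1 / (2 * δ) * (ρ ^ 4 * (a ^ 2 * c ^ (2 * s))) := by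
        have : 0 ≤ 1 / (2 * δ) * (δ * (d * c ^ (s + 2)) + ρ ^ 2 * a * c ^ s) ^ 2 := by positivity
        have e : 1 / (2 * δ) * (δ * (d * c ^ (s + 2)) + ρ ^ 2 * a * c ^ s) ^ 2 =
          δ / 2 * (d ^ 2 * c ^ (2 * s + 4)) + 1 / (2 * δ) * (ρ ^ 4 * (a ^ 2 * c ^ (2 * s)))
          + ρ ^ 2 * (a * (d * c ^ (2 * s + 2))) := by
          field_simp
          ring
        linarith
      have y2 : ρ ^ 2 * -(a * (b * w1)) ≤
          ρ ^ 2 / 2 * (b ^ 2 * c ^ (2 * s + 2)) + M ^ 2 / 2 * (ρ ^ 4 * (a ^ 2 * c ^ (2 * s))) := by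
        have z1 : -(a * (b * w1)) ≤ |a| * |b| * (M * ρ * c ^ (2 * s + 1)) := by
          calc -(a * (b * w1)) ≤ |a * (b * w1)| := neg_le_abs _
            _ = |a| * |b| * |w1| := by rw [abs_mul, abs_mul, mul_assoc]
            _ ≤ _ := by gcongr
        have z2 : 0 ≤ (ρ * |b| * c ^ (s + 1) - M * ρ ^ 2 * |a| * c ^ s) ^ 2 / 2 := by positivity
        have z3 : (ρ * |b| * c ^ (s + 1) - M * ρ ^ 2 * |a| * c ^ s) ^ 2 / 2 =
          ρ ^ 2 / 2 * (|b| ^ 2 * c ^ (2 * s + 2)) + M ^ 2 / 2 * (ρ ^ 4 * (|a| ^ 2 * c ^ (2 * s)))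
          - ρ ^ 2 * (|a| * |b| * (M * ρ * c ^ (2 * s + 1))) := by ring
        rw [sq_abs, sq_abs] at z3
        have z4 := mul_le_mul_of_nonneg_left z1 (sq_nonneg ρ)
        linarith
      have y3 : δ / 2 * (d ^ 2 * c ^ (2 * s + 4)) ≤
          δ / 2 * (S1 (pd i v) x * c ^ (2 * s + 4)) := by gcongr
      have e : ρ ^ 2 * -(a * (d * c ^ (2 * s + 2) + b * w1)) =
        ρ ^ 2 * -(a * (d * c ^ (2 * s + 2))) + ρ ^ 2 * -(a * (b * w1)) := by ring
      rw [e, hK]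
      have e' : (1 / (2 * δ) + M ^ 2 / 2) * ρ ^ 4 * (a ^ 2 * c ^ (2 * s)) =
        1 / (2 * δ) * (ρ ^ 4 * (a ^ 2 * c ^ (2 * s))) + M ^ 2 / 2 * (ρ ^ 4 * (a ^ 2 * c ^ (2 * s))) :=
        by ring
      rw [e']
      linarith
    rw [integral_const_mul, integral_neg, i5.2, ← e, ← e1] at mono
    linarith
  have hsum := Finset.sum_le_sum fun i (_ : i ∈ Finset.univ) => main i
  rw [← Finset.mul_sum, Finset.sum_add_distrib, ← Finset.mul_sum, ← integral_finsetSum,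
    ← integral_finsetSum] at hsum
  · simp only [← Finset.sum_mul] at hsum
    simp only [Finset.sum_const, Finset.card_univ, Fintype.card_fin, nsmul_eq_mul] at hsum
    simp only [S2]
    unfold S1 at hsum ⊢
    linarith
  · intro i _
    exact int_cut hρ (by omega) (S1_cont (hv.pd i))
  · intro i _
    exact int_cut hρ (by omega) ((hv.pd i).cont.pow 2)

/-- energy densities -/
def D0 (l : ℕ) (u : EE n → ℝ) (ρ : ℝ) (x : EE n) : ℝ := ρ ^ 6 * (u x ^ 2 * cut ρ x ^ (2 * l))
def D1 (l : ℕ) (u : EE n → ℝ) (ρ : ℝ) (x : EE n) : ℝ := ρ ^ 4 * (S1 u x * cut ρ x ^ (2 * l + 2))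
def D2 (l : ℕ) (u : EE n → ℝ) (ρ : ℝ) (x : EE n) : ℝ := ρ ^ 2 * (S2 u x * cut ρ x ^ (2 * l + 4))
def D3 (l : ℕ) (u : EE n → ℝ) (ρ : ℝ) (x : EE n) : ℝ := S3 u x * cut ρ x ^ (2 * l + 6)

lemma D0_int {l : ℕ} (hl : 1 ≤ l) {u : EE n → ℝ} (hu : Sm u) {ρ : ℝ} (hρ : 0 < ρ) :
    Integrable (D0 l u ρ) :=
  (int_cut hρ (by omega) (hu.cont.pow 2)).const_mul _
lemma D1_int {l : ℕ} (hl : 1 ≤ l) {u : EE n → ℝ} (hu : Sm u) {ρ : ℝ} (hρ : 0 < ρ) :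
    Integrable (D1 l u ρ) :=
  (int_cut hρ (by omega) (S1_cont hu)).const_mul _
lemma D2_int {l : ℕ} (hl : 1 ≤ l) {u : EE n → ℝ} (hu : Sm u) {ρ : ℝ} (hρ : 0 < ρ) :
    Integrable (D2 l u ρ) :=
  (int_cut hρ (by omega) (S2_cont hu)).const_mul _
lemma D3_int {l : ℕ} (hl : 1 ≤ l) {u : EE n → ℝ} (hu : Sm u) {ρ : ℝ} (hρ : 0 < ρ) :
    Integrable (D3 l u ρ) :=
  (int_cut hρ (by omega) (S3_cont hu))

lemma D0_nonneg (l : ℕ) (u : EE n → ℝ) (ρ : ℝ) (x : EE n) : 0 ≤ D0 l u ρ x := by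
  have := cut_nonneg ρ x
  unfold D0; positivity
lemma D1_nonneg (l : ℕ) (u : EE n → ℝ) (ρ : ℝ) (x : EE n) : 0 ≤ D1 l u ρ x := by
  have := cut_nonneg ρ x
  have := S1_nonneg u x
  unfold D1; positivity
lemma D2_nonneg (l : ℕ) (u : EE n → ℝ) (ρ : ℝ) (x : EE n) : 0 ≤ D2 l u ρ x := by
  have := cut_nonneg ρ x
  have := S2_nonneg u x
  unfold D2; positivity
lemma D3_nonneg (l : ℕ) (u : EE n → ℝ) (ρ : ℝ) (x : EE n) : 0 ≤ D3 l u ρ x := by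
  have := cut_nonneg ρ x
  have := S3_nonneg u x
  unfold D3; positivity

def A0 (l : ℕ) (u : EE n → ℝ) (ρ : ℝ) : ℝ := ∫ x, D0 l u ρ x
def A1 (l : ℕ) (u : EE n → ℝ) (ρ : ℝ) : ℝ := ∫ x, D1 l u ρ x
def A2 (l : ℕ) (u : EE n → ℝ) (ρ : ℝ) : ℝ := ∫ x, D2 l u ρ x
def A3 (l : ℕ) (u : EE n → ℝ) (ρ : ℝ) : ℝ := ∫ x, D3 l u ρ x

lemma interp1 (n l : ℕ) (hl : 1 ≤ l) (δ : ℝ) (hδ : 0 < δ) : ∃ C : ℝ, 0 ≤ C ∧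
    ∀ v : EE n → ℝ, Sm v → ∀ ρ : ℝ, 0 < ρ → A1 l v ρ ≤ δ * A2 l v ρ + C * A0 l v ρ := by
  obtain ⟨C, hC, h⟩ := interp n l hl δ hδ
  refine ⟨C, hC, fun v hv ρ hρ => ?_⟩
  have := mul_le_mul_of_nonneg_left (h v hv ρ hρ) (sq_nonneg ρ)
  simp only [A1, A2, A0, D0, D1, D2, integral_const_mul]
  nlinarith [this]

lemma interp2 (n l : ℕ) (hl : 1 ≤ l) (δ : ℝ) (hδ : 0 < δ) : ∃ C : ℝ, 0 ≤ C ∧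
    ∀ v : EE n → ℝ, Sm v → ∀ ρ : ℝ, 0 < ρ → A2 l v ρ ≤ δ * A3 l v ρ + C * A1 l v ρ := by
  obtain ⟨C, hC, h⟩ := interp n (l + 1) (by omega) δ hδ
  refine ⟨C, hC, fun v hv ρ hρ => ?_⟩
  have hsum := Finset.sum_le_sum fun i (_ : i ∈ Finset.univ) => h (pd i v) (hv.pd i) ρ hρ
  rw [← Finset.mul_sum, Finset.sum_add_distrib, ← Finset.mul_sum, ← Finset.mul_sum,
    ← Finset.mul_sum, ← integral_finsetSum,
    ← integral_finsetSum, ← integral_finsetSum] at hsum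
  · simp only [← Finset.sum_mul] at hsum
    simp only [A1, A2, A3, D1, D2, D3, integral_const_mul]
    exact hsum
  · intro i _
    exact int_cut hρ (by omega) ((hv.pd i).cont.pow 2)
  · intro i _
    exact int_cut hρ (by omega) (S2_cont (hv.pd i))
  · intro i _
    exact int_cut hρ (by omega) (S1_cont (hv.pd i))

lemma sqrt_D0 (l : ℕ) (u : EE n → ℝ) {ρ : ℝ} (hρ : 0 < ρ) (x : EE n) :
    √(D0 l u ρ x) = ρ ^ 3 * |u x| * cut ρ x ^ l := by
  have := cut_nonneg ρ x
  rw [Real.sqrt_eq_iff_mul_self_eq (D0_nonneg _ _ _ _) (by positivity)]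
  unfold D0
  rw [← sq_abs (u x)]
  ring
lemma sqrt_D1 (l : ℕ) (u : EE n → ℝ) {ρ : ℝ} (hρ : 0 < ρ) (x : EE n) :
    √(D1 l u ρ x) = ρ ^ 2 * √(S1 u x) * cut ρ x ^ (l + 1) := by
  have := cut_nonneg ρ x
  rw [Real.sqrt_eq_iff_mul_self_eq (D1_nonneg _ _ _ _) (by positivity)]
  unfold D1
  have := Real.sq_sqrt (S1_nonneg u x)
  rw [← this, Real.sqrt_sq (by positivity)]
  ring
lemma sqrt_D2 (l : ℕ) (u : EE n → ℝ) {ρ : ℝ} (hρ : 0 < ρ) (x : EE n) :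
    √(D2 l u ρ x) = ρ * √(S2 u x) * cut ρ x ^ (l + 2) := by
  have := cut_nonneg ρ x
  rw [Real.sqrt_eq_iff_mul_self_eq (D2_nonneg _ _ _ _) (by positivity)]
  unfold D2
  have := Real.sq_sqrt (S2_nonneg u x)
  rw [← this, Real.sqrt_sq (by positivity)]
  ring
lemma sqrt_D3 (l : ℕ) (u : EE n → ℝ) (ρ : ℝ) (x : EE n) :
    √(D3 l u ρ x) = √(S3 u x) * cut ρ x ^ (l + 3) := by
  have := cut_nonneg ρ x
  rw [Real.sqrt_eq_iff_mul_self_eq (D3_nonneg _ _ _ _) (by positivity)]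
  unfold D3
  have := Real.sq_sqrt (S3_nonneg u x)
  rw [← this, Real.sqrt_sq (by positivity)]
  ring

/-- sum of square roots of lower densities -/
def Y (l : ℕ) (u : EE n → ℝ) (ρ : ℝ) (x : EE n) : ℝ :=
  √(D0 l u ρ x) + √(D1 l u ρ x) + √(D2 l u ρ x)

lemma Y_nonneg (l : ℕ) (u : EE n → ℝ) (ρ : ℝ) (x : EE n) : 0 ≤ Y l u ρ x := by
  unfold Y; positivity

lemma Y_sq (l : ℕ) (u : EE n → ℝ) (ρ : ℝ) (x : EE n) :
    Y l u ρ x ^ 2 ≤ 3 * (D0 l u ρ x + D1 l u ρ x + D2 l u ρ x) := by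
  unfold Y
  have h0 := Real.sq_sqrt (D0_nonneg l u ρ x)
  have h1 := Real.sq_sqrt (D1_nonneg l u ρ x)
  have h2 := Real.sq_sqrt (D2_nonneg l u ρ x)
  nlinarith [sq_nonneg (√(D0 l u ρ x) - √(D1 l u ρ x)), sq_nonneg (√(D0 l u ρ x) - √(D2 l u ρ x)),
    sq_nonneg (√(D1 l u ρ x) - √(D2 l u ρ x))]

lemma comm1 (n l : ℕ) (hl : 1 ≤ l) : ∃ M : ℝ, 0 ≤ M ∧ ∀ u : EE n → ℝ, Sm u → ∀ ρ : ℝ, 0 < ρ →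
    ∀ x i j k, |p3 i j k (fun x => u x * cut ρ x ^ (l + 3)) x - p3 i j k u x * cut ρ x ^ (l + 3)|
      ≤ M * Y l u ρ x := by
  obtain ⟨M, hM, hb⟩ := cut_bounds n l hl
  refine ⟨3 * M, by positivity, fun u hu ρ hρ x i j k => ?_⟩
  obtain ⟨b1, b2, b3⟩ := hb ρ hρ x
  refine (leibniz3_bound hu (cut_pow_sm ρ (l + 3)) i j k x le_rfl (abs_pd_le u x)
    (abs_pd2_le u x) b1 b2 b3).trans ?_
  unfold Y
  rw [sqrt_D0 _ _ hρ, sqrt_D1 _ _ hρ, sqrt_D2 _ _ hρ]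
  have := cut_nonneg ρ x
  have h : 0 ≤ 2 * M * (ρ ^ 3 * |u x| * cut ρ x ^ l) := by positivity
  linarith

lemma comm2 (n l : ℕ) : ∃ M : ℝ, 0 ≤ M ∧ ∀ u : EE n → ℝ, Sm u → ∀ ρ : ℝ, 0 < ρ →
    ∀ x i j k, |p3 i j k (fun x => u x * cut ρ x ^ (2 * l + 6)) x
        - p3 i j k u x * cut ρ x ^ (2 * l + 6)|
      ≤ M * cut ρ x ^ (l + 3) * Y l u ρ x := by
  obtain ⟨M, hM, hb⟩ := cut_bounds n (2 * l + 3) (by omega)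
  refine ⟨3 * M, by positivity, fun u hu ρ hρ x i j k => ?_⟩
  obtain ⟨b1, b2, b3⟩ := hb ρ hρ x
  refine (leibniz3_bound hu (cut_pow_sm ρ (2 * l + 6)) i j k x le_rfl (abs_pd_le u x)
    (abs_pd2_le u x) b1 b2 b3).trans ?_
  unfold Y
  rw [sqrt_D0 _ _ hρ, sqrt_D1 _ _ hρ, sqrt_D2 _ _ hρ]
  have := cut_nonneg ρ x
  have h : 0 ≤ 2 * M * cut ρ x ^ (l + 3) * (ρ ^ 3 * |u x| * cut ρ x ^ l) := by positivity
  have e : 3 * M * cut ρ x ^ (l + 3) * (ρ ^ 3 * |u x| * cut ρ x ^ l +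
      ρ ^ 2 * √(S1 u x) * cut ρ x ^ (l + 1) + ρ * √(S2 u x) * cut ρ x ^ (l + 2)) -
      (3 * √(S2 u x) * (M * ρ * cut ρ x ^ (2 * l + 3 + 2)) +
        3 * √(S1 u x) * (M * ρ ^ 2 * cut ρ x ^ (2 * l + 3 + 1)) +
        |u x| * (M * ρ ^ 3 * cut ρ x ^ (2 * l + 3))) =
      2 * M * cut ρ x ^ (l + 3) * (ρ ^ 3 * |u x| * cut ρ x ^ l) := by ring
  linarith

lemma sum3_const (n : ℕ) (c : ℝ) : ∑ _i : Fin n, ∑ _j : Fin n, ∑ _k : Fin n, c = n ^ 3 * c := by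
  simp only [Finset.sum_const, Finset.card_univ, Fintype.card_fin, nsmul_eq_mul]
  ring

lemma sum3_le {n : ℕ} {f g : Fin n → Fin n → Fin n → ℝ} (h : ∀ i j k, f i j k ≤ g i j k) :
    ∑ i, ∑ j, ∑ k, f i j k ≤ ∑ i, ∑ j, ∑ k, g i j k :=
  Finset.sum_le_sum fun i _ => Finset.sum_le_sum fun j _ => Finset.sum_le_sum fun k _ => h i j k

lemma integral_sum3 {n : ℕ} {f : Fin n → Fin n → Fin n → EE n → ℝ}
    (h : ∀ i j k, Integrable (f i j k)) :
    ∫ x, ∑ i, ∑ j, ∑ k, f i j k x = ∑ i, ∑ j, ∑ k, ∫ x, f i j k x := by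
  rw [integral_finsetSum _ fun i _ => integrable_finsetSum _ fun j _ =>
    integrable_finsetSum _ fun k _ => h i j k]
  refine Finset.sum_congr rfl fun i _ => ?_
  rw [integral_finsetSum _ fun j _ => integrable_finsetSum _ fun k _ => h i j k]
  refine Finset.sum_congr rfl fun j _ => ?_
  rw [integral_finsetSum _ fun k _ => h i j k]

lemma integrable_sum3 {n : ℕ} {f : Fin n → Fin n → Fin n → EE n → ℝ}
    (h : ∀ i j k, Integrable (f i j k)) :
    Integrable (fun x => ∑ i, ∑ j, ∑ k, f i j k x) :=
  integrable_finsetSum _ fun i _ => integrable_finsetSum _ fun j _ =>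
    integrable_finsetSum _ fun k _ => h i j k

lemma cs_p3 {f : EE n → ℝ} (h : HasCompactSupport f) (i j k : Fin n) :
    HasCompactSupport (p3 i j k f) := cs_pd (cs_pd (cs_pd h i) j) k

lemma young {a b ε : ℝ} (hε : 0 < ε) : a * b ≤ ε * a ^ 2 + 1 / (4 * ε) * b ^ 2 := by
  have : 0 ≤ 1 / (4 * ε) * (2 * ε * a - b) ^ 2 := by positivity
  have e : 1 / (4 * ε) * (2 * ε * a - b) ^ 2 = ε * a ^ 2 + 1 / (4 * ε) * b ^ 2 - a * b := by
    field_simp; ring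
  linarith

/-- the quadratic form of `u cut^(l+3)` -/
lemma L3 (n l : ℕ) (hl : 1 ≤ l) (ε : ℝ) (hε : 0 < ε) : ∃ C : ℝ, 0 ≤ C ∧
    ∀ u : EE n → ℝ, Sm u → ∀ ρ : ℝ, 0 < ρ →
    ∫ x, S3 (fun x => u x * cut ρ x ^ (l + 3)) x ≤
      (1 + ε) * A3 l u ρ + C * (A0 l u ρ + A1 l u ρ + A2 l u ρ) := by
  obtain ⟨M, hM, hb⟩ := comm1 n l hl
  refine ⟨n ^ 3 * ((1 + 1 / ε) * M ^ 2 * 3), by positivity, fun u hu ρ hρ => ?_⟩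
  set C := n ^ 3 * ((1 + 1 / ε) * M ^ 2 * 3) with hC
  have hi := int_lin4 (D3_int hl hu hρ) (D0_int hl hu hρ) (D1_int hl hu hρ) (D2_int hl hu hρ)
    (1 + ε) C C C
  have hsm : Sm (fun x => u x * cut ρ x ^ (l + 3)) := hu.mul (cut_pow_sm _ _)
  have hcs : HasCompactSupport (fun x => u x * cut ρ x ^ (l + 3)) :=
    (cut_pow_cs hρ (by omega)).mul_left
  have hIntS : Integrable (S3 (fun x => u x * cut ρ x ^ (l + 3))) := by
    refine integrable_sum3 (f := fun i j k x => (p3 i j k (fun x => u x * cut ρ x ^ (l + 3)) x) ^ 2)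
      fun i j k => ?_
    refine int_cs ((hsm.p3 i j k).cont.pow 2) ?_
    simp only [pow_two]
    exact (cs_p3 hcs i j k).mul_left
  have := integral_mono hIntS hi.1 fun x => ?_
  · rw [hi.2] at this
    unfold A0 A1 A2 A3
    linarith
  · show S3 (fun x => u x * cut ρ x ^ (l + 3)) x ≤ _
    have pt : ∀ i j k, (p3 i j k (fun x => u x * cut ρ x ^ (l + 3)) x) ^ 2 ≤
        (1 + ε) * cut ρ x ^ (2 * l + 6) * (p3 i j k u x) ^ 2 + (1 + 1 / ε) * M ^ 2 * Y l u ρ x ^ 2 := by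
      intro i j k
      have h1 := hb u hu ρ hρ x i j k
      set P := p3 i j k (fun x => u x * cut ρ x ^ (l + 3)) x
      set a := p3 i j k u x * cut ρ x ^ (l + 3) with ha
      have h2 : (P - a) ^ 2 ≤ M ^ 2 * Y l u ρ x ^ 2 := by
        rw [← sq_abs, ← mul_pow]
        gcongr
      have h3 : P ^ 2 ≤ (1 + ε) * a ^ 2 + (1 + 1 / ε) * (P - a) ^ 2 := by
        have : 0 ≤ 1 / ε * (ε * a - (P - a)) ^ 2 := by positivity
        have e : 1 / ε * (ε * a - (P - a)) ^ 2
          = (1 + ε) * a ^ 2 + (1 + 1 / ε) * (P - a) ^ 2 - P ^ 2 := by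
          field_simp; ring
        linarith
      have h4 : (1 + 1 / ε) * (P - a) ^ 2 ≤ (1 + 1 / ε) * (M ^ 2 * Y l u ρ x ^ 2) := by gcongr
      have h5 : a ^ 2 = cut ρ x ^ (2 * l + 6) * (p3 i j k u x) ^ 2 := by rw [ha]; ring
      rw [h5] at h3
      linarith
    have := sum3_le pt
    rw [S3_eq]
    refine this.trans ?_
    simp only [Finset.sum_add_distrib, ← Finset.mul_sum]
    rw [← S3_eq]
    have hY := Y_sq l u ρ x
    have hY' : (n : ℝ) ^ 3 * ((1 + 1 / ε) * M ^ 2 * Y l u ρ x ^ 2) ≤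
      (n : ℝ) ^ 3 * ((1 + 1 / ε) * M ^ 2 * (3 * (D0 l u ρ x + D1 l u ρ x + D2 l u ρ x))) := by
      gcongr
    have e := sum3_const n ((1 + 1 / ε) * M ^ 2 * Y l u ρ x ^ 2)
    simp only [Finset.sum_const, Finset.card_univ, Fintype.card_fin, nsmul_eq_mul] at e ⊢
    rw [hC]
    unfold D3 at *
    linarith

/-- the weak formulation tested with `u cut^(2l+6)` -/
lemma L2 (n l : ℕ) (hl : 1 ≤ l) (ε : ℝ) (hε : 0 < ε) : ∃ C : ℝ, 0 ≤ C ∧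
    ∀ u : EE n → ℝ, Sm u → ∀ ρ : ℝ, 0 < ρ →
    |(∑ i, ∑ j, ∑ k, ∫ x, p3 i j k u x * p3 i j k (fun x => u x * cut ρ x ^ (2 * l + 6)) x)
      - A3 l u ρ| ≤ ε * A3 l u ρ + C * (A0 l u ρ + A1 l u ρ + A2 l u ρ) := by
  obtain ⟨M, hM, hb⟩ := comm2 n l
  set ε' := ε / (n ^ 3 + 1) with hε'
  have hε'0 : 0 < ε' := by positivity
  refine ⟨n ^ 3 * (1 / (4 * ε') * M ^ 2 * 3), by positivity, fun u hu ρ hρ => ?_⟩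
  set C := n ^ 3 * (1 / (4 * ε') * M ^ 2 * 3) with hC
  have hi := int_lin4 (D3_int hl hu hρ) (D0_int hl hu hρ) (D1_int hl hu hρ) (D2_int hl hu hρ)
    ε C C C
  have hsm : Sm (fun x => u x * cut ρ x ^ (2 * l + 6)) := hu.mul (cut_pow_sm _ _)
  have hcs : HasCompactSupport (fun x => u x * cut ρ x ^ (2 * l + 6)) :=
    (cut_pow_cs hρ (by omega)).mul_left
  have hint0 : ∀ i j k, Integrable (fun x => p3 i j k u x *
      p3 i j k (fun x => u x * cut ρ x ^ (2 * l + 6)) x) := fun i j k =>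
    int_cs ((hu.p3 i j k).cont.mul (hsm.p3 i j k).cont) (cs_p3 hcs i j k).mul_left
  rw [← integral_sum3 hint0]
  unfold A3
  rw [← integral_sub (integrable_sum3 hint0) (D3_int hl hu hρ)]
  refine abs_integral_le_integral_abs.trans ?_
  have := integral_mono ((integrable_sum3 hint0).sub (D3_int hl hu hρ)).abs hi.1 fun x => ?_
  · rw [hi.2] at this
    refine this.trans ?_
    unfold A0 A1 A2
    linarith
  · show |(∑ i, ∑ j, ∑ k, p3 i j k u x * p3 i j k (fun x => u x * cut ρ x ^ (2 * l + 6)) x)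
      - D3 l u ρ x| ≤ _
    have e1 : (∑ i, ∑ j, ∑ k, p3 i j k u x * p3 i j k (fun x => u x * cut ρ x ^ (2 * l + 6)) x)
      - D3 l u ρ x = ∑ i, ∑ j, ∑ k, p3 i j k u x *
        (p3 i j k (fun x => u x * cut ρ x ^ (2 * l + 6)) x
          - p3 i j k u x * cut ρ x ^ (2 * l + 6)) := by
      unfold D3
      rw [S3_eq]
      simp only [Finset.sum_mul, ← Finset.sum_sub_distrib]
      refine Finset.sum_congr rfl fun i _ => Finset.sum_congr rfl fun j _ =>
        Finset.sum_congr rfl fun k _ => ?_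
      ring
    rw [e1]
    have hY := Y_sq l u ρ x
    have hD3 := D3_nonneg l u ρ x
    have pt : ∀ i j k, |p3 i j k u x * (p3 i j k (fun x => u x * cut ρ x ^ (2 * l + 6)) x
          - p3 i j k u x * cut ρ x ^ (2 * l + 6))| ≤
        ε' * D3 l u ρ x + 1 / (4 * ε') * (M ^ 2 * (3 * (D0 l u ρ x + D1 l u ρ x + D2 l u ρ x))) := by
      intro i j k
      have h1 := hb u hu ρ hρ x i j k
      have h2 := abs_pd3_le u x i j k
      have hY0 := Y_nonneg l u ρ x
      rw [abs_mul]
      calc _ ≤ √(S3 u x) * (M * cut ρ x ^ (l + 3) * Y l u ρ x) := by gcongr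
        _ = √(D3 l u ρ x) * (M * Y l u ρ x) := by rw [sqrt_D3]; ring
        _ ≤ ε' * √(D3 l u ρ x) ^ 2 + 1 / (4 * ε') * (M * Y l u ρ x) ^ 2 := young hε'0
        _ = ε' * D3 l u ρ x + 1 / (4 * ε') * (M ^ 2 * Y l u ρ x ^ 2) := by
          rw [Real.sq_sqrt hD3, mul_pow]
        _ ≤ _ := by gcongr
    have step : |∑ i, ∑ j, ∑ k, p3 i j k u x *
        (p3 i j k (fun x => u x * cut ρ x ^ (2 * l + 6)) x
          - p3 i j k u x * cut ρ x ^ (2 * l + 6))| ≤ ∑ i : Fin n, ∑ j : Fin n, ∑ k : Fin n,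
          (ε' * D3 l u ρ x +
            1 / (4 * ε') * (M ^ 2 * (3 * (D0 l u ρ x + D1 l u ρ x + D2 l u ρ x)))) :=
      (Finset.abs_sum_le_sum_abs _ _).trans <| Finset.sum_le_sum fun i _ =>
      (Finset.abs_sum_le_sum_abs _ _).trans <| Finset.sum_le_sum fun j _ =>
      (Finset.abs_sum_le_sum_abs _ _).trans <| Finset.sum_le_sum fun k _ => pt i j k
    rw [sum3_const] at step
    refine step.trans ?_
    have hn : (n : ℝ) ^ 3 * ε' ≤ ε := by
      rw [hε', mul_div_assoc', div_le_iff₀ (by positivity)]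
      nlinarith
    have := mul_le_mul_of_nonneg_right hn hD3
    rw [hC]
    linarith

/-- potential energy density -/
def FF (p : ℝ) (u : EE n → ℝ) (x : EE n) : ℝ := |u x| ^ (p + 1)

lemma FF_nonneg (p : ℝ) (u : EE n → ℝ) (x : EE n) : 0 ≤ FF p u x :=
  Real.rpow_nonneg (abs_nonneg _) _

lemma FF_cont {p : ℝ} (hp : 1 < p) {u : EE n → ℝ} (hu : Sm u) : Continuous (FF p u) :=
  hu.cont.abs.rpow_const fun _ => Or.inr (by linarith)

lemma FF_eq {p : ℝ} (hp : 1 < p) (u : EE n → ℝ) (x : EE n) :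
    FF p u x = |u x| ^ (p - 1) * u x ^ 2 := by
  unfold FF
  rw [show p + 1 = (p - 1) + 2 by ring, Real.rpow_add' (abs_nonneg _) (by linarith), ← sq_abs]
  norm_num

lemma weak {p : ℝ} {u : EE n → ℝ} (hu : Sm u)
    (heq : ∀ x, laplacian (laplacian (laplacian u)) x = -(|u x| ^ (p - 1) * u x))
    {g : EE n → ℝ} (hg : Sm g) (hc : HasCompactSupport g) :
    ∫ x, |u x| ^ (p - 1) * u x * g x = ∑ i, ∑ j, ∑ k, ∫ x, p3 i j k u x * p3 i j k g x := by
  have := tri_ibp hu hg hc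
  simp only [heq, neg_mul, integral_neg, neg_inj] at this
  exact this

lemma indic_int {f : EE n → ℝ} (hf : Continuous f) (r : ℝ) :
    Integrable ((Metric.closedBall (0 : EE n) r).indicator f) := by
  rw [integrable_indicator_iff Metric.isClosed_closedBall.measurableSet]
  exact hf.continuousOn.integrableOn_compact (isCompact_closedBall _ _)

lemma stab {p : ℝ} (hp : 1 < p) {u : EE n → ℝ} (hu : Sm u)
    {Θ : Set (EE n)} (hΘ : IsCompact Θ)
    (hstab : ∀ φ : EuclideanSpace ℝ (Fin n) → ℝ, ContDiff ℝ (⊤ : ℕ∞) φ →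
      HasCompactSupport φ → tsupport φ ⊆ Θᶜ →
      p * (∫ x, |u x| ^ (p - 1) * φ x ^ 2) ≤ ∫ x, ‖gradient (laplacian φ) x‖ ^ 2) :
    ∃ R K : ℝ, 0 < R ∧ ∀ ζ : EE n → ℝ, Sm ζ → HasCompactSupport ζ →
      (∀ x, ‖x‖ < R → ζ x = 1) →
      p * ∫ x, FF p u x * ζ x ^ 2 ≤ (∫ x, S3 (fun x => u x * ζ x) x) + K := by
  obtain ⟨r0, hr0⟩ := hΘ.isBounded.subset_ball (0 : EE n)
  set r := max r0 1 with hr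
  have hrpos : 0 < r := lt_of_lt_of_le one_pos (le_max_right _ _)
  have hsub : Θ ⊆ Metric.ball 0 r := hr0.trans (Metric.ball_subset_ball (le_max_left _ _))
  let b : ContDiffBump (0 : EE n) := ⟨r, 2 * r, hrpos, by linarith⟩
  let χ : EE n → ℝ := fun x => 1 - b x
  have hχ : Sm χ := contDiff_const.sub b.contDiff
  have hχ0 : ∀ x, ‖x‖ < r → χ x = 0 := by
    intro x hx
    have : b x = 1 := b.one_of_mem_closedBall (by
      show x ∈ Metric.closedBall (0 : EE n) r
      simpa using hx.le)
    simp [χ, this]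
  have hχ1 : ∀ x, 2 * r ≤ ‖x‖ → χ x = 1 := by
    intro x hx
    have : b x = 0 := b.zero_of_le_dist (by
      show 2 * r ≤ dist x 0
      simpa using hx)
    simp [χ, this]
  have huχ : Sm (fun x => u x * χ x) := hu.mul hχ
  set B := Metric.closedBall (0 : EE n) (2 * r) with hB
  have hBmem : ∀ x, x ∈ B ↔ ‖x‖ ≤ 2 * r := by intro x; simp [hB]
  refine ⟨3 * r, p * (∫ x, B.indicator (FF p u) x) +
    ∫ x, B.indicator (S3 (fun x => u x * χ x)) x, by positivity, fun ζ hζ hζc hζ1 => ?_⟩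
  let φ : EE n → ℝ := fun x => (u x * χ x) * ζ x
  have hφ : Sm φ := huχ.mul hζ
  have hφc : HasCompactSupport φ := hζc.mul_left
  have hφs : tsupport φ ⊆ Θᶜ := by
    intro x hx hxΘ
    rw [← not_not (a := x ∈ tsupport φ), notMem_tsupport_iff_eventuallyEq] at hx
    apply hx
    filter_upwards [Metric.isOpen_ball.mem_nhds (hsub hxΘ)] with y hy
    have : ‖y‖ < r := by simpa using hy
    simp [φ, hχ0 y this]
  have h1 := hstab φ hφ hφc hφs
  rw [grad_lap_ibp hφ hφc] at h1
  have hS3int : ∀ f : EE n → ℝ, Sm f → HasCompactSupport f →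
      ∀ i j k, Integrable (fun x => (p3 i j k f x) ^ 2) := by
    intro f hf hfc i j k
    refine int_cs ((hf.p3 i j k).cont.pow 2) ?_
    simp only [pow_two]
    exact (cs_p3 hfc i j k).mul_left
  rw [← integral_sum3 (hS3int φ hφ hφc)] at h1
  simp only [← S3_eq] at h1
  have huζ : Sm (fun x => u x * ζ x) := hu.mul hζ
  have huζc : HasCompactSupport (fun x => u x * ζ x) := hζc.mul_left
  have cs2 : ∀ f : EE n → ℝ, HasCompactSupport f → HasCompactSupport (fun x => f x ^ 2) := by
    intro f hf
    simp only [pow_two]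
    exact hf.mul_left
  have iA : Integrable (fun x => FF p u x * ζ x ^ 2) :=
    int_cs ((FF_cont hp hu).mul (hζ.cont.pow 2)) (cs2 _ hζc).mul_left
  have hcp : Continuous fun x => |u x| ^ (p - 1) :=
    hu.cont.abs.rpow_const fun _ => Or.inr (by linarith)
  have iB : Integrable (fun x => |u x| ^ (p - 1) * φ x ^ 2) :=
    int_cs (hcp.mul (hφ.cont.pow 2)) (cs2 _ hφc).mul_left
  have iC := indic_int (FF_cont hp hu) (2 * r)
  have iD := indic_int (S3_cont huχ) (2 * r)
  have iE : Integrable (S3 φ) := integrable_sum3 (hS3int φ hφ hφc)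
  have iF : Integrable (S3 (fun x => u x * ζ x)) := integrable_sum3 (hS3int _ huζ huζc)
  have m1 : ∫ x, FF p u x * ζ x ^ 2 ≤
      (∫ x, |u x| ^ (p - 1) * φ x ^ 2) + ∫ x, B.indicator (FF p u) x := by
    rw [← integral_add iB iC]
    refine integral_mono iA (iB.add iC) fun x => ?_
    show FF p u x * ζ x ^ 2 ≤ |u x| ^ (p - 1) * φ x ^ 2 + B.indicator (FF p u) x
    have hup : 0 ≤ |u x| ^ (p - 1) := Real.rpow_nonneg (abs_nonneg _) _
    by_cases hx : ‖x‖ ≤ 2 * r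
    · rw [Set.indicator_of_mem ((hBmem x).2 hx), hζ1 x (by linarith)]
      have : 0 ≤ |u x| ^ (p - 1) * φ x ^ 2 := by positivity
      linarith
    · rw [Set.indicator_of_notMem (fun h => hx ((hBmem x).1 h)), FF_eq hp]
      simp only [φ, hχ1 x (not_le.1 hx).le]
      apply le_of_eq; ring
  have m2 : ∫ x, S3 φ x ≤
      (∫ x, S3 (fun x => u x * ζ x) x) + ∫ x, B.indicator (S3 (fun x => u x * χ x)) x := by
    rw [← integral_add iF iD]
    refine integral_mono iE (iF.add iD) fun x => ?_
    show S3 φ x ≤ S3 (fun x => u x * ζ x) x + B.indicator (S3 (fun x => u x * χ x)) x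
    by_cases hx : ‖x‖ ≤ 2 * r
    · rw [Set.indicator_of_mem ((hBmem x).2 hx)]
      have : φ =ᶠ[nhds x] fun x => u x * χ x := by
        have : {y : EE n | ‖y‖ < 3 * r} ∈ nhds x :=
          (isOpen_lt continuous_norm continuous_const).mem_nhds (by
            show ‖x‖ < 3 * r
            linarith)
        filter_upwards [this] with y hy
        simp [φ, hζ1 y hy]
      rw [S3_congr this]
      linarith [S3_nonneg (fun x => u x * ζ x) x]
    · rw [Set.indicator_of_notMem (fun h => hx ((hBmem x).1 h))]
      have : φ =ᶠ[nhds x] fun x => u x * ζ x := by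
        have : {y : EE n | 2 * r < ‖y‖} ∈ nhds x :=
          (isOpen_lt continuous_const continuous_norm).mem_nhds (not_le.1 hx)
        filter_upwards [this] with y hy
        simp [φ, hχ1 y (le_of_lt hy)]
      rw [S3_congr this]
      linarith
  have := mul_le_mul_of_nonneg_left m1 (by linarith : (0:ℝ) ≤ p)
  linarith

def GG (l : ℕ) (p : ℝ) (u : EE n → ℝ) (ρ : ℝ) : ℝ := ∫ x, FF p u x * cut ρ x ^ (2 * l + 6)

lemma L4_point {p : ℝ} (hp : 1 < p) {l : ℕ} (hlp : 12 / (p - 1) ≤ 2 * l) {ε : ℝ} (hε : 0 < ε)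
    {ρ : ℝ} (hρ : 0 < ρ) {t c : ℝ} (ht : 0 ≤ t) (hc : 0 ≤ c) (hc1 : c ≤ 1) :
    ρ ^ 6 * (t ^ 2 * c ^ (2 * l)) ≤ ε * (t ^ (p + 1) * c ^ (2 * l + 6)) +
      ρ ^ 6 * (ρ ^ 6 / ε) ^ (2 / (p - 1)) := by
  have hp' : 0 < p - 1 := by linarith
  have e1 : t ^ (p + 1) = t ^ (p - 1) * t ^ 2 := by
    rw [show p + 1 = (p - 1) + 2 by ring, Real.rpow_add' ht (by linarith)]
    norm_num
  have h0 : 0 ≤ t ^ (p - 1) := Real.rpow_nonneg ht _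
  by_cases h : ρ ^ 6 ≤ ε * (t ^ (p - 1) * c ^ 6)
  · have h1 : 0 ≤ ρ ^ 6 * (ρ ^ 6 / ε) ^ (2 / (p - 1)) := by positivity
    have h2 : ρ ^ 6 * (t ^ 2 * c ^ (2 * l)) ≤ ε * (t ^ (p - 1) * c ^ 6) * (t ^ 2 * c ^ (2 * l)) := by
      gcongr
    rw [e1]
    have : ε * (t ^ (p - 1) * c ^ 6) * (t ^ 2 * c ^ (2 * l)) =
      ε * (t ^ (p - 1) * t ^ 2 * c ^ (2 * l + 6)) := by ring
    linarith
  · push Not at h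
    have h1 : 0 ≤ ε * (t ^ (p + 1) * c ^ (2 * l + 6)) := by positivity
    have h2 : t ^ (p - 1) * c ^ 6 ≤ ρ ^ 6 / ε := by
      rw [le_div_iff₀ hε]; linarith
    have h3 : (t ^ (p - 1) * c ^ 6) ^ (2 / (p - 1)) ≤ (ρ ^ 6 / ε) ^ (2 / (p - 1)) :=
      Real.rpow_le_rpow (by positivity) h2 (by positivity)
    rw [Real.mul_rpow h0 (by positivity), ← Real.rpow_mul ht, ← Real.rpow_natCast c 6,
      ← Real.rpow_mul hc] at h3
    have e2 : (p - 1) * (2 / (p - 1)) = 2 := by field_simp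
    have e3 : ((6 : ℕ) : ℝ) * (2 / (p - 1)) = 12 / (p - 1) := by push_cast; ring
    rw [e2, e3, Real.rpow_two] at h3
    have h4 : c ^ (2 * l) ≤ c ^ (12 / (p - 1)) := by
      rcases hc.eq_or_lt with rfl | hcp
      · have : l ≠ 0 := by
          rintro rfl
          have : 0 < 12 / (p - 1) := by positivity
          simp at hlp
          linarith
        rw [zero_pow (by omega)]
        exact Real.rpow_nonneg le_rfl _
      · rw [← Real.rpow_natCast]
        apply Real.rpow_le_rpow_of_exponent_ge hcp hc1
        push_cast; exact hlp
    have h5 : t ^ 2 * c ^ (2 * l) ≤ (ρ ^ 6 / ε) ^ (2 / (p - 1)) :=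
      (mul_le_mul_of_nonneg_left h4 (sq_nonneg t)).trans h3
    have := mul_le_mul_of_nonneg_left h5 (by positivity : 0 ≤ ρ ^ 6)
    linarith

lemma L4 {p : ℝ} (hp : 1 < p) (hn : 1 ≤ n) {l : ℕ} (hl : 1 ≤ l) (hlp : 12 / (p - 1) ≤ 2 * l)
    {u : EE n → ℝ} (hu : Sm u) (ε : ℝ) (hε : 0 < ε) : ∃ C : ℝ, 0 ≤ C ∧ ∀ ρ : ℝ, 0 < ρ →
    A0 l u ρ ≤ ε * GG l p u ρ + C * ρ ^ (6 + 12 / (p - 1) - n) := by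
  have hp' : 0 < p - 1 := by linarith
  haveI : Nonempty (Fin n) := ⟨⟨0, by omega⟩⟩
  set V := volume.real (Metric.ball (0 : EE n) 1) with hV
  refine ⟨(1 / ε) ^ (2 / (p - 1)) * 2 ^ n * V, by positivity, fun ρ hρ => ?_⟩
  set k := ρ ^ 6 * (ρ ^ 6 / ε) ^ (2 / (p - 1)) with hk
  have i1 : Integrable (fun x => FF p u x * cut ρ x ^ (2 * l + 6)) :=
    int_cut hρ (by omega) (FF_cont hp hu)
  have i2 := indic_int (n := n) (f := fun _ => k) continuous_const (2 / ρ)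
  have m : A0 l u ρ ≤ ∫ x, ε * (FF p u x * cut ρ x ^ (2 * l + 6)) +
      (Metric.closedBall (0 : EE n) (2 / ρ)).indicator (fun _ => k) x := by
    refine integral_mono (D0_int hl hu hρ) ((i1.const_mul ε).add i2) fun x => ?_
    show D0 l u ρ x ≤ ε * (FF p u x * cut ρ x ^ (2 * l + 6)) +
      (Metric.closedBall (0 : EE n) (2 / ρ)).indicator (fun _ => k) x
    unfold D0 FF
    by_cases hx : x ∈ Metric.closedBall (0 : EE n) (2 / ρ)
    · rw [Set.indicator_of_mem hx, ← sq_abs (u x)]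
      exact L4_point hp hlp hε hρ (abs_nonneg _) (cut_nonneg _ _) (cut_le_one _ _)
    · have : cut ρ x = 0 := by
        apply cut_eq_zero hρ
        have : 2 / ρ < ‖x‖ := by simpa using hx
        rw [div_lt_iff₀ hρ] at this
        linarith
      rw [Set.indicator_of_notMem hx, this]
      simp [show l ≠ 0 by omega]
  rw [integral_add (i1.const_mul ε) i2, integral_const_mul,
    integral_indicator Metric.isClosed_closedBall.measurableSet, setIntegral_const] at m
  have hvol : volume.real (Metric.closedBall (0 : EE n) (2 / ρ)) = (2 / ρ) ^ n * V := by
    rw [measureReal_def, Measure.addHaar_closedBall _ _ (by positivity), ENNReal.toReal_mul,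
      ENNReal.toReal_ofReal (by positivity)]
    simp [hV, measureReal_def]
  rw [hvol, smul_eq_mul] at m
  have e : (2 / ρ) ^ n * V * k =
      (1 / ε) ^ (2 / (p - 1)) * 2 ^ n * V * ρ ^ (6 + 12 / (p - 1) - n) := by
    rw [hk, Real.rpow_sub hρ, Real.rpow_add hρ, Real.rpow_natCast,
      show ρ ^ 6 / ε = ρ ^ 6 * (1 / ε) by ring, Real.mul_rpow (by positivity) (by positivity),
      ← Real.rpow_natCast ρ 6, ← Real.rpow_mul hρ.le,
      show ((6 : ℕ) : ℝ) * (2 / (p - 1)) = 12 / (p - 1) by push_cast; ring, div_pow]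
    push_cast
    ring
  rw [e] at m
  exact m

lemma A0_nonneg (l : ℕ) (u : EE n → ℝ) (ρ : ℝ) : 0 ≤ A0 l u ρ :=
  integral_nonneg fun x => D0_nonneg l u ρ x
lemma A1_nonneg (l : ℕ) (u : EE n → ℝ) (ρ : ℝ) : 0 ≤ A1 l u ρ :=
  integral_nonneg fun x => D1_nonneg l u ρ x
lemma A2_nonneg (l : ℕ) (u : EE n → ℝ) (ρ : ℝ) : 0 ≤ A2 l u ρ :=
  integral_nonneg fun x => D2_nonneg l u ρ x
lemma A3_nonneg (l : ℕ) (u : EE n → ℝ) (ρ : ℝ) : 0 ≤ A3 l u ρ :=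
  integral_nonneg fun x => D3_nonneg l u ρ x
lemma GG_nonneg (l : ℕ) (p : ℝ) (u : EE n → ℝ) (ρ : ℝ) : 0 ≤ GG l p u ρ :=
  integral_nonneg fun x => mul_nonneg (FF_nonneg p u x) (pow_nonneg (cut_nonneg _ _) _)

lemma elim12 (n l : ℕ) (hl : 1 ≤ l) (ε : ℝ) (hε : 0 < ε) : ∃ C : ℝ, 0 ≤ C ∧
    ∀ v : EE n → ℝ, Sm v → ∀ ρ : ℝ, 0 < ρ →
      A1 l v ρ + A2 l v ρ ≤ ε * A3 l v ρ + C * A0 l v ρ := by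
  obtain ⟨C1, hC1, h1⟩ := interp2 n l hl (ε / 3) (by positivity)
  obtain ⟨C2, hC2, h2⟩ := interp1 n l hl (1 / (2 * (C1 + 1))) (by positivity)
  refine ⟨3 * C1 * C2 + C2, by positivity, fun v hv ρ hρ => ?_⟩
  have a := h1 v hv ρ hρ
  have b := h2 v hv ρ hρ
  have n2 := A2_nonneg l v ρ
  have n1 := A1_nonneg l v ρ
  have n0 := A0_nonneg l v ρ
  have c : C1 * (1 / (2 * (C1 + 1)) * A2 l v ρ) ≤ 1 / 2 * A2 l v ρ := by
    rw [← mul_assoc]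
    gcongr
    rw [mul_one_div, div_le_div_iff₀ (by positivity) (by norm_num)]
    linarith
  have d : 1 / (2 * (C1 + 1)) * A2 l v ρ ≤ 1 / 2 * A2 l v ρ := by
    gcongr
    linarith
  have e := mul_le_mul_of_nonneg_left b hC1
  nlinarith

lemma E2 {p : ℝ} (hp : 1 < p) {l : ℕ} (hl : 1 ≤ l) {u : EE n → ℝ} (hu : Sm u)
    (heq : ∀ x, laplacian (laplacian (laplacian u)) x = -(|u x| ^ (p - 1) * u x))
    (ε : ℝ) (hε : 0 < ε) : ∃ C : ℝ, 0 ≤ C ∧ ∀ ρ : ℝ, 0 < ρ →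
      |GG l p u ρ - A3 l u ρ| ≤ ε * A3 l u ρ + C * A0 l u ρ := by
  obtain ⟨C1, hC1, h1⟩ := L2 n l hl (ε / 2) (by positivity)
  obtain ⟨C2, hC2, h2⟩ := elim12 n l hl (ε / (2 * (C1 + 1))) (by positivity)
  refine ⟨C1 + C1 * C2, by positivity, fun ρ hρ => ?_⟩
  have hw := weak hu heq (hu.mul (cut_pow_sm ρ (2 * l + 6)))
    (cut_pow_cs hρ (by omega : 1 ≤ 2 * l + 6)).mul_left
  have hG : GG l p u ρ = ∫ x, |u x| ^ (p - 1) * u x * (u x * cut ρ x ^ (2 * l + 6)) := by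
    unfold GG
    congr 1; ext x
    rw [FF_eq hp]; ring
  rw [hG, hw]
  have a := h1 u hu ρ hρ
  have b := mul_le_mul_of_nonneg_left (h2 u hu ρ hρ) hC1
  have n3 := A3_nonneg l u ρ
  have c : C1 * (ε / (2 * (C1 + 1)) * A3 l u ρ) ≤ ε / 2 * A3 l u ρ := by
    rw [← mul_assoc]
    gcongr
    rw [mul_div_assoc', div_le_div_iff₀ (by positivity) (by norm_num)]
    nlinarith
  nlinarith

lemma E3 {p : ℝ} {l : ℕ} (hl : 1 ≤ l) {u : EE n → ℝ} (hu : Sm u) {R K : ℝ}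
    (hst : ∀ ζ : EE n → ℝ, Sm ζ → HasCompactSupport ζ →
      (∀ x, ‖x‖ < R → ζ x = 1) →
      p * ∫ x, FF p u x * ζ x ^ 2 ≤ (∫ x, S3 (fun x => u x * ζ x) x) + K)
    (ε : ℝ) (hε : 0 < ε) : ∃ C : ℝ, 0 ≤ C ∧ ∀ ρ : ℝ, 0 < ρ → ρ * R ≤ 1 →
      p * GG l p u ρ ≤ (1 + ε) * A3 l u ρ + C * A0 l u ρ + K := by
  obtain ⟨C1, hC1, h1⟩ := L3 n l hl (ε / 2) (by positivity)
  obtain ⟨C2, hC2, h2⟩ := elim12 n l hl (ε / (2 * (C1 + 1))) (by positivity)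
  refine ⟨C1 + C1 * C2, by positivity, fun ρ hρ hρR => ?_⟩
  have hw := hst (fun x => cut ρ x ^ (l + 3)) (cut_pow_sm ρ (l + 3))
    (cut_pow_cs hρ (by omega)) (fun x hx => by
      show cut ρ x ^ (l + 3) = 1
      rw [cut_eq_one hρ, one_pow]
      nlinarith)
  have hG : GG l p u ρ = ∫ x, FF p u x * (cut ρ x ^ (l + 3)) ^ 2 := by
    unfold GG
    congr 1; ext x
    rw [← pow_mul]; congr 2; ring
  rw [← hG] at hw
  have a := h1 u hu ρ hρ
  have b := mul_le_mul_of_nonneg_left (h2 u hu ρ hρ) hC1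
  have n3 := A3_nonneg l u ρ
  have c : C1 * (ε / (2 * (C1 + 1)) * A3 l u ρ) ≤ ε / 2 * A3 l u ρ := by
    rw [← mul_assoc]
    gcongr
    rw [mul_div_assoc', div_le_div_iff₀ (by positivity) (by norm_num)]
    nlinarith
  nlinarith

/-- Uniform energy bound for small `ρ`. -/
lemma E4 {p : ℝ} (hp : 1 < p) (hn : 1 ≤ n) (hd : 0 < 6 + 12 / (p - 1) - n)
    {l : ℕ} (hl : 1 ≤ l) (hlp : 12 / (p - 1) ≤ 2 * l) {u : EE n → ℝ} (hu : Sm u)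
    (heq : ∀ x, laplacian (laplacian (laplacian u)) x = -(|u x| ^ (p - 1) * u x))
    {R K : ℝ} (hR : 0 < R)
    (hst : ∀ ζ : EE n → ℝ, Sm ζ → HasCompactSupport ζ →
      (∀ x, ‖x‖ < R → ζ x = 1) →
      p * ∫ x, FF p u x * ζ x ^ 2 ≤ (∫ x, S3 (fun x => u x * ζ x) x) + K) :
    ∃ B : ℝ, 0 ≤ B ∧ ∀ᶠ ρ in nhdsWithin (0:ℝ) (Set.Ioi 0), 0 < ρ ∧ GG l p u ρ ≤ B ∧
      A3 l u ρ ≤ B := by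
  have hp' : 0 < p - 1 := by linarith
  set ε := (p - 1) / (p + 3) with hεd
  have hε : 0 < ε := by rw [hεd]; positivity
  obtain ⟨C1, hC1, h1⟩ := E2 hp hl hu heq ε hε
  obtain ⟨C2, hC2, h2⟩ := E3 hl hu hst ε hε
  set C := (p + 1) / 2 * C1 + C2 with hC
  have hCn : 0 ≤ C := by rw [hC]; positivity
  obtain ⟨C3, hC3, h3⟩ := L4 hp hn hl hlp hu ((p - 1) / (4 * (C + 1))) (by positivity)
  obtain ⟨C4, hC4, h4⟩ := L4 hp hn hl hlp hu 1 one_pos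
  set B0 := 4 / (p - 1) * (C * C3 + |K|) with hB0
  have hB0n : 0 ≤ B0 := by rw [hB0]; positivity
  refine ⟨B0 + (p + 3) / 4 * (B0 + C1 * (B0 + C4)), by positivity, ?_⟩
  have hev : Set.Ioo (0:ℝ) (min 1 (1 / R)) ∈ nhdsWithin (0:ℝ) (Set.Ioi 0) :=
    Ioo_mem_nhdsGT (by positivity)
  filter_upwards [hev] with ρ hρ
  have hρ0 : 0 < ρ := hρ.1
  have hρ1 : ρ ≤ 1 := (hρ.2.trans_le (min_le_left _ _)).le
  have hρR : ρ * R ≤ 1 := by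
    have := (hρ.2.trans_le (min_le_right _ _)).le
    rwa [le_div_iff₀ hR] at this
  have hpow : ρ ^ (6 + 12 / (p - 1) - n) ≤ 1 := Real.rpow_le_one hρ0.le hρ1 hd.le
  have hpow0 : 0 ≤ ρ ^ (6 + 12 / (p - 1) - n) := Real.rpow_nonneg hρ0.le _
  have a := (abs_le.1 (h1 ρ hρ0)).1
  have b := h2 ρ hρ0 hρR
  have c := h3 ρ hρ0
  have d := h4 ρ hρ0
  have nG := GG_nonneg l p u ρ
  have n3 := A3_nonneg l u ρ
  have n0 := A0_nonneg l u ρ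
  have e1 : 1 - ε = 4 / (p + 3) := by rw [hεd]; field_simp; ring
  have e2 : 1 + ε = (p + 1) / 2 * (4 / (p + 3)) := by rw [hεd]; field_simp; ring
  have a1 : 4 / (p + 3) * A3 l u ρ ≤ GG l p u ρ + C1 * A0 l u ρ := by
    rw [← e1]; linarith
  have b1 : (p - 1) / 2 * GG l p u ρ ≤ C * A0 l u ρ + K := by
    rw [e2] at b
    have := mul_le_mul_of_nonneg_left a1 (by positivity : 0 ≤ (p + 1) / 2)
    rw [hC]
    nlinarith
  have c1 : C * A0 l u ρ ≤ (p - 1) / 4 * GG l p u ρ + C * C3 := by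
    have s1 := mul_le_mul_of_nonneg_left c hCn
    have s2 : C * ((p - 1) / (4 * (C + 1)) * GG l p u ρ) ≤ (p - 1) / 4 * GG l p u ρ := by
      rw [← mul_assoc]
      gcongr
      rw [mul_div_assoc', div_le_div_iff₀ (by positivity) (by norm_num)]
      nlinarith
    have s3 : C * (C3 * ρ ^ (6 + 12 / (p - 1) - n)) ≤ C * (C3 * 1) := by gcongr
    linarith
  have g : GG l p u ρ ≤ B0 := by
    rw [hB0, div_mul_eq_mul_div, le_div_iff₀ hp']
    have := le_abs_self K
    nlinarith
  have d1 : A0 l u ρ ≤ B0 + C4 := by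
    have s3 : (C4 * ρ ^ (6 + 12 / (p - 1) - n)) ≤ (C4 * 1) := by gcongr
    linarith
  have t : A3 l u ρ ≤ (p + 3) / 4 * (B0 + C1 * (B0 + C4)) := by
    have s4 : C1 * A0 l u ρ ≤ C1 * (B0 + C4) := by gcongr
    have s5 : 4 / (p + 3) * A3 l u ρ ≤ (B0 + C1 * (B0 + C4)) := by linarith
    have s6 := mul_le_mul_of_nonneg_left s5 (by positivity : 0 ≤ (p + 3) / 4)
    have s7 : (p + 3) / 4 * (4 / (p + 3) * A3 l u ρ) = A3 l u ρ := by field_simp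
    linarith
  refine ⟨hρ0, ?_, ?_⟩
  · have : 0 ≤ (p + 3) / 4 * (B0 + C1 * (B0 + C4)) := by positivity
    linarith
  · linarith

lemma tendsto_of_eps {f : ℝ → ℝ} {L : Filter ℝ} (h0 : ∀ᶠ ρ in L, 0 ≤ f ρ) {B : ℝ} (hB : 0 ≤ B)
    (h : ∀ ε : ℝ, 0 < ε → ∃ g : ℝ → ℝ, Tendsto g L (nhds 0) ∧ ∀ᶠ ρ in L, f ρ ≤ ε * B + g ρ) :
    Tendsto f L (nhds 0) := by
  rw [Metric.tendsto_nhds]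
  intro ε hε
  obtain ⟨g, hg, hfg⟩ := h (ε / (2 * (B + 1))) (by positivity)
  rw [Metric.tendsto_nhds] at hg
  filter_upwards [h0, hfg, hg (ε / 2) (by positivity)] with ρ a b c
  simp only [Real.dist_eq, sub_zero] at c ⊢
  rw [abs_of_nonneg a]
  have d := (abs_lt.1 c).2
  have e : ε / (2 * (B + 1)) * B ≤ ε / 2 := by
    rw [div_mul_eq_mul_div, div_le_div_iff₀ (by positivity) (by norm_num)]
    nlinarith
  linarith

lemma E5 {p : ℝ} (hp : 1 < p) (hn : 1 ≤ n) (hd : 0 < 6 + 12 / (p - 1) - n)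
    {l : ℕ} (hl : 1 ≤ l) (hlp : 12 / (p - 1) ≤ 2 * l) {u : EE n → ℝ} (hu : Sm u)
    (heq : ∀ x, laplacian (laplacian (laplacian u)) x = -(|u x| ^ (p - 1) * u x))
    {B : ℝ} (hB : 0 ≤ B)
    (h : ∀ᶠ ρ in nhdsWithin (0:ℝ) (Set.Ioi 0), 0 < ρ ∧ GG l p u ρ ≤ B ∧ A3 l u ρ ≤ B) :
    Tendsto (fun ρ => A1 l u ρ + A2 l u ρ) (nhdsWithin (0:ℝ) (Set.Ioi 0)) (nhds 0) ∧
    Tendsto (fun ρ => GG l p u ρ - A3 l u ρ) (nhdsWithin (0:ℝ) (Set.Ioi 0)) (nhds 0) := by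
  have hpow : Tendsto (fun ρ : ℝ => ρ ^ (6 + 12 / (p - 1) - n))
      (nhdsWithin (0:ℝ) (Set.Ioi 0)) (nhds 0) := by
    have : ContinuousAt (fun ρ : ℝ => ρ ^ (6 + 12 / (p - 1) - n)) 0 :=
      Real.continuousAt_rpow_const _ _ (Or.inr hd.le)
    have h2 := this.tendsto
    rw [Real.zero_rpow hd.ne'] at h2
    exact h2.mono_left nhdsWithin_le_nhds
  have t0 : Tendsto (fun ρ => A0 l u ρ) (nhdsWithin (0:ℝ) (Set.Ioi 0)) (nhds 0) := by
    refine tendsto_of_eps (Eventually.of_forall fun ρ => A0_nonneg l u ρ) hB fun ε hε => ?_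
    obtain ⟨C, hC, h4⟩ := L4 hp hn hl hlp hu ε hε
    refine ⟨fun ρ => C * ρ ^ (6 + 12 / (p - 1) - n), by simpa using hpow.const_mul C, ?_⟩
    filter_upwards [h] with ρ hρ
    have := h4 ρ hρ.1
    have := mul_le_mul_of_nonneg_left hρ.2.1 hε.le
    linarith
  constructor
  · refine tendsto_of_eps (Eventually.of_forall fun ρ => add_nonneg (A1_nonneg l u ρ)
      (A2_nonneg l u ρ)) hB fun ε hε => ?_
    obtain ⟨C, hC, h4⟩ := elim12 n l hl ε hε
    refine ⟨fun ρ => C * A0 l u ρ, by simpa using t0.const_mul C, ?_⟩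
    filter_upwards [h] with ρ hρ
    have := h4 u hu ρ hρ.1
    have := mul_le_mul_of_nonneg_left hρ.2.2 hε.le
    linarith
  · rw [tendsto_zero_iff_abs_tendsto_zero]
    refine tendsto_of_eps (Eventually.of_forall fun ρ => abs_nonneg _) hB fun ε hε => ?_
    obtain ⟨C, hC, h4⟩ := E2 hp hl hu heq ε hε
    refine ⟨fun ρ => C * A0 l u ρ, by simpa using t0.const_mul C, ?_⟩
    filter_upwards [h] with ρ hρ
    have := h4 ρ hρ.1
    have := mul_le_mul_of_nonneg_left hρ.2.2 hε.le
    simp only [Function.comp]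
    linarith

/-- continuous nonnegative function with bounded cut-off integrals is integrable -/
lemma integrable_of_cut {f : EE n → ℝ} (hf : Continuous f) (h0 : ∀ x, 0 ≤ f x) {N : ℕ}
    (hN : 1 ≤ N) {B : ℝ}
    (h : ∀ᶠ ρ in nhdsWithin (0:ℝ) (Set.Ioi 0), 0 < ρ ∧ ∫ x, f x * cut ρ x ^ N ≤ B) :
    Integrable f := by
  have hinv : Tendsto (fun ρ : ℝ => ρ⁻¹) (nhdsWithin (0:ℝ) (Set.Ioi 0)) atTop :=
    tendsto_inv_nhdsGT_zero
  refine (aecover_closedBall (μ := volume) (x := (0 : EE n))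
    hinv).integrable_of_integral_bounded_of_nonneg_ae B
    (fun ρ => hf.continuousOn.integrableOn_compact (isCompact_closedBall _ _))
    (Eventually.of_forall h0) ?_
  filter_upwards [h] with ρ ⟨hρ, hb⟩
  refine le_trans ?_ hb
  rw [← integral_indicator Metric.isClosed_closedBall.measurableSet]
  refine integral_mono (indic_int hf _) (int_cut hρ hN hf) fun x => ?_
  by_cases hx : x ∈ Metric.closedBall (0 : EE n) ρ⁻¹
  · rw [Set.indicator_of_mem hx]
    show f x ≤ f x * cut ρ x ^ N
    rw [cut_eq_one hρ]
    · simp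
    · have : ‖x‖ ≤ ρ⁻¹ := by simpa using hx
      calc ρ * ‖x‖ ≤ ρ * ρ⁻¹ := by gcongr
        _ = 1 := by field_simp
  · rw [Set.indicator_of_notMem hx]
    exact mul_nonneg (h0 x) (pow_nonneg (cut_nonneg _ _) _)

/-- dominated convergence along the cut-offs -/
lemma dct {f : EE n → ℝ} (hf : Integrable f) {g : ℝ → EE n → ℝ} {a M : ℝ}
    (hg : ∀ ρ, 0 < ρ → Continuous (g ρ))
    (hM : ∀ ρ, 0 < ρ → ∀ x, |g ρ x| ≤ M) (h1 : ∀ ρ, 0 < ρ → ∀ x, ρ * ‖x‖ < 1 → g ρ x = a) :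
    Tendsto (fun ρ => ∫ x, f x * g ρ x) (nhdsWithin (0:ℝ) (Set.Ioi 0)) (nhds (a * ∫ x, f x)) := by
  rw [← integral_const_mul]
  refine tendsto_integral_filter_of_dominated_convergence (fun x => M * |f x|) ?_ ?_
    (hf.abs.const_mul M) ?_
  · filter_upwards [self_mem_nhdsWithin] with ρ hρ
    exact hf.aestronglyMeasurable.mul (hg ρ hρ).aestronglyMeasurable
  · filter_upwards [self_mem_nhdsWithin] with ρ hρ
    refine Eventually.of_forall fun x => ?_
    rw [Real.norm_eq_abs, abs_mul, mul_comm]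
    exact mul_le_mul_of_nonneg_right (hM ρ hρ x) (abs_nonneg _)
  · refine Eventually.of_forall fun x => ?_
    apply tendsto_const_nhds.congr'
    have : Set.Ioo (0:ℝ) (1 / (‖x‖ + 1)) ∈ nhdsWithin (0:ℝ) (Set.Ioi 0) :=
      Ioo_mem_nhdsGT (by positivity)
    filter_upwards [this] with ρ hρ
    rw [h1 ρ hρ.1 x, mul_comm]
    have := hρ.2
    rw [lt_div_iff₀ (by positivity)] at this
    nlinarith [hρ.1]

lemma dct_cut {f : EE n → ℝ} (hf : Integrable f) (N : ℕ) :
    Tendsto (fun ρ => ∫ x, f x * cut ρ x ^ N) (nhdsWithin (0:ℝ) (Set.Ioi 0))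
      (nhds (∫ x, f x)) := by
  have := dct hf (g := fun ρ x => cut ρ x ^ N) (a := 1) (M := 1)
    (fun ρ _ => (cut_pow_sm ρ N).cont)
    (fun ρ _ x => by
      rw [abs_of_nonneg (pow_nonneg (cut_nonneg _ _) _)]
      exact pow_le_one₀ (cut_nonneg _ _) (cut_le_one _ _))
    (fun ρ hρ x hx => by
      show cut ρ x ^ N = 1
      rw [cut_eq_one hρ hx.le, one_pow])
  simpa using this

/-- energy: finiteness and the identity -/
lemma energy {p : ℝ} (hp : 1 < p) (hn : 1 ≤ n) (hd : 0 < 6 + 12 / (p - 1) - n)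
    {l : ℕ} (hl : 1 ≤ l) (hlp : 12 / (p - 1) ≤ 2 * l) {u : EE n → ℝ} (hu : Sm u)
    (heq : ∀ x, laplacian (laplacian (laplacian u)) x = -(|u x| ^ (p - 1) * u x))
    {Θ : Set (EE n)} (hΘ : IsCompact Θ)
    (hstab : ∀ φ : EuclideanSpace ℝ (Fin n) → ℝ, ContDiff ℝ (⊤ : ℕ∞) φ →
      HasCompactSupport φ → tsupport φ ⊆ Θᶜ →
      p * (∫ x, |u x| ^ (p - 1) * φ x ^ 2) ≤ ∫ x, ‖gradient (laplacian φ) x‖ ^ 2) :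
    Integrable (FF p u) ∧ Integrable (S3 u) ∧ ∫ x, FF p u x = ∫ x, S3 u x ∧
    Tendsto (fun ρ => A1 l u ρ + A2 l u ρ) (nhdsWithin (0:ℝ) (Set.Ioi 0)) (nhds 0) := by
  obtain ⟨R, K, hR, hst⟩ := stab hp hu hΘ hstab
  obtain ⟨B, hB, h⟩ := E4 hp hn hd hl hlp hu heq hR hst
  obtain ⟨t1, t2⟩ := E5 hp hn hd hl hlp hu heq hB h
  have iF : Integrable (FF p u) := integrable_of_cut (FF_cont hp hu) (FF_nonneg p u)
    (N := 2 * l + 6) (by omega) (B := B) (h.mono fun ρ hρ => ⟨hρ.1, hρ.2.1⟩)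
  have iS : Integrable (S3 u) := integrable_of_cut (S3_cont hu) (S3_nonneg u)
    (N := 2 * l + 6) (by omega) (B := B) (h.mono fun ρ hρ => ⟨hρ.1, hρ.2.2⟩)
  refine ⟨iF, iS, ?_, t1⟩
  have := (dct_cut iF (2 * l + 6)).sub (dct_cut iS (2 * l + 6))
  have := tendsto_nhds_unique this t2
  linarith
/-- Euler operator -/
def TT (f : EE n → ℝ) (x : EE n) : ℝ := ∑ i, x i * pd i f x

lemma coord_sm (i : Fin n) : Sm (fun x : EE n => x i) :=
  (EuclideanSpace.proj (𝕜 := ℝ) i : EE n →L[ℝ] ℝ).contDiff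

lemma pd_coord (i j : Fin n) : pd j (fun x : EE n => x i) = fun _ => if i = j then 1 else 0 := by
  funext x
  have : HasFDerivAt (fun x : EE n => x i) (EuclideanSpace.proj (𝕜 := ℝ) i : EE n →L[ℝ] ℝ) x :=
    (EuclideanSpace.proj (𝕜 := ℝ) i : EE n →L[ℝ] ℝ).hasFDerivAt
  simp only [pd, this.fderiv]
  simp

lemma Sm.TT {f : EE n → ℝ} (hf : Sm f) : Sm (TT f) :=
  Sm.sum fun i _ => (coord_sm i).mul (hf.pd i)

lemma pd_TT {f : EE n → ℝ} (hf : Sm f) (j : Fin n) :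
    pd j (TT f) = fun x => pd j f x + TT (pd j f) x := by
  show pd j (fun x => ∑ i, x i * pd i f x) = _
  rw [pd_sum _ fun i _ => ((coord_sm i).mul (hf.pd i)).diff]
  funext x
  unfold TT
  simp only [pd_mul (coord_sm _).diff (hf.pd _).diff, pd_coord, Finset.sum_add_distrib]
  congr 1
  · simp
  · simp only [pd_comm hf _ j]

lemma pd2_TT {f : EE n → ℝ} (hf : Sm f) (i j : Fin n) :
    pd j (pd i (TT f)) = fun x => 2 * pd j (pd i f) x + TT (pd j (pd i f)) x := by
  rw [pd_TT hf, pd_add (hf.pd i).diff (hf.pd i).TT.diff, pd_TT (hf.pd i)]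
  funext x; ring

lemma p3_TT {f : EE n → ℝ} (hf : Sm f) (i j k : Fin n) (x : EE n) :
    p3 i j k (TT f) x = 3 * p3 i j k f x + TT (p3 i j k f) x := by
  unfold p3
  have e : pd j (pd i (TT f)) = fun x => pd j (pd i f) x + (pd j (pd i f) x + TT (pd j (pd i f)) x) := by
    rw [pd2_TT hf]; funext x; ring
  have h := (hf.pd i).pd j
  rw [e, pd_add h.diff (h.add h.TT).diff, pd_add h.diff h.TT.diff, pd_TT h]
  ring

lemma abs_coord_le (x : EE n) (i : Fin n) : |x i| ≤ ‖x‖ := by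
  simpa using EuclideanSpace.norm_eq x ▸ PiLp.norm_apply_le x i

lemma abs_TT_le {f : EE n → ℝ} {x : EE n} {r s : ℝ} (hr : ‖x‖ ≤ r) (hs : ∀ i, |pd i f x| ≤ s) :
    |TT f x| ≤ n * r * s := by
  unfold TT
  refine (Finset.abs_sum_le_sum_abs _ _).trans ?_
  have : ∀ i ∈ Finset.univ, |x i * pd i f x| ≤ r * s := by
    intro i _
    rw [abs_mul]
    have := (abs_coord_le x i).trans hr
    exact mul_le_mul this (hs i) (abs_nonneg _) ((abs_nonneg _).trans this)
  refine (Finset.sum_le_sum this).trans (le_of_eq ?_)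
  simp; ring

/-- integration by parts for the Euler operator -/
lemma TT_ibp {f ψ : EE n → ℝ} (hf : ContDiff ℝ 1 f) (hψ : Sm ψ) (hc : HasCompactSupport ψ) :
    ∫ x, TT f x * ψ x = -(n * (∫ x, f x * ψ x) + ∫ x, f x * TT ψ x) := by
  have hcont : ∀ i, Continuous (pd i f) := fun i => cont_pd hf i
  have hci : ∀ i, HasCompactSupport (fun x : EE n => x i * ψ x) := fun i => hc.mul_left
  have hsm : ∀ i : Fin n, Sm (fun x : EE n => x i * ψ x) := fun i => (coord_sm i).mul hψ
  have e1 : ∀ x, TT f x * ψ x = ∑ i, pd i f x * (x i * ψ x) := by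
    intro x; unfold TT; rw [Finset.sum_mul]
    exact Finset.sum_congr rfl fun i _ => by ring
  simp only [e1]
  have i1 : ∀ i, Integrable (fun x => pd i f x * (x i * ψ x)) :=
    fun i => int_cs ((hcont i).mul (hsm i).cont) (hci i).mul_left
  rw [integral_finsetSum _ fun i _ => i1 i]
  have e2 : ∀ i, ∫ x, pd i f x * (x i * ψ x) =
      -((∫ x, f x * ψ x) + ∫ x, f x * (x i * pd i ψ x)) := by
    intro i
    rw [ibp hf (hsm i).one (hci i) i, ← integral_add]
    · congr 1
      congr 1; ext x
      rw [pd_mul (coord_sm i).diff hψ.diff, pd_coord]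
      simp; ring
    · exact int_cs (hf.continuous.mul hψ.cont) hc.mul_left
    · exact int_cs (hf.continuous.mul ((coord_sm i).cont.mul (hψ.pd i).cont))
        ((cs_pd hc i).mul_left).mul_left
  have i2 : ∀ i, Integrable (fun x => f x * (x i * pd i ψ x)) := fun i =>
    int_cs (hf.continuous.mul ((coord_sm i).cont.mul (hψ.pd i).cont))
        ((cs_pd hc i).mul_left).mul_left
  have e3 : ∫ x, f x * TT ψ x = ∑ i, ∫ x, f x * (x i * pd i ψ x) := by
    rw [← integral_finsetSum _ fun i _ => i2 i]
    congr 1; ext x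
    unfold TT
    rw [Finset.mul_sum]
  rw [e3]
  simp only [e2, Finset.sum_neg_distrib, Finset.sum_add_distrib, Finset.sum_const,
    Finset.card_univ, Fintype.card_fin, nsmul_eq_mul]

lemma FF_c1 {p : ℝ} (hp : 1 < p) {u : EE n → ℝ} (hu : Sm u) : ContDiff ℝ 1 (FF p u) := by
  have := hu.one.norm_rpow (p := p + 1) (by linarith)
  exact this

lemma TT_FF {p : ℝ} (hp : 1 < p) {u : EE n → ℝ} (hu : Sm u) (x : EE n) :
    TT (FF p u) x = (p + 1) * (|u x| ^ (p - 1) * u x * TT u x) := by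
  have h : ∀ i, pd i (FF p u) x = (p + 1) * (|u x| ^ (p - 1) * u x) * pd i u x := by
    intro i
    have h1 := (hasDerivAt_abs_rpow (u x) (p := p + 1) (by linarith))
    have h2 := h1.comp_hasFDerivAt x (hu.diff x).hasFDerivAt
    have h3 : fderiv ℝ (FF p u) x = _ := h2.fderiv
    unfold pd
    rw [h3]
    simp only [smul_apply, smul_eq_mul]
    rw [show p + 1 - 2 = p - 1 by ring]
    ring
  unfold TT
  simp only [h, Finset.mul_sum]
  exact Finset.sum_congr rfl fun i _ => by ring

lemma TT_sq_ibp {q ψ : EE n → ℝ} (hq : Sm q) (hψ : Sm ψ) (hc : HasCompactSupport ψ) :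
    ∫ x, q x * TT q x * ψ x =
      -(1 / 2) * (n * (∫ x, q x ^ 2 * ψ x) + ∫ x, q x ^ 2 * TT ψ x) := by
  have hq2 : Sm (fun x => q x ^ 2) := by simpa only [pow_two] using hq.mul hq
  have h := TT_ibp hq2.one hψ hc
  have e : ∀ x, q x * TT q x * ψ x = (1 / 2) * (TT (fun x => q x ^ 2) x * ψ x) := by
    intro x
    have : TT (fun x => q x ^ 2) x = 2 * (q x * TT q x) := by
      unfold TT
      simp only [pow_two, pd_mul hq.diff hq.diff, Finset.mul_sum]
      exact Finset.sum_congr rfl fun i _ => by ring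
    rw [this]; ring
  simp only [e]
  rw [integral_const_mul, h]; ring
/-- gradient size of the Pohozaev cut-off -/
def gg (l : ℕ) (ρ : ℝ) (x : EE n) : ℝ := (∑ i, |pd i (fun x : EE n => cut ρ x ^ (2 * l + 6 + 3)) x|) / ρ

def psi (l : ℕ) (ρ : ℝ) (x : EE n) : ℝ := cut ρ x ^ (2 * l + 6 + 3)

lemma psi_sm (l : ℕ) (ρ : ℝ) : Sm (psi l ρ : EE n → ℝ) := cut_pow_sm ρ _
lemma psi_cs (l : ℕ) {ρ : ℝ} (hρ : 0 < ρ) : HasCompactSupport (psi l ρ : EE n → ℝ) :=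
  cut_pow_cs hρ (by omega)

lemma psi_pd_zero (l : ℕ) {ρ : ℝ} (hρ : 0 < ρ) {x : EE n} (hx : ρ * ‖x‖ < 1) (i : Fin n) :
    pd i (psi l ρ) x = 0 := by
  have h : (psi l ρ : EE n → ℝ) =ᶠ[nhds x] fun _ => 1 := by
    have : {y : EE n | ρ * ‖y‖ < 1} ∈ nhds x :=
      (isOpen_lt (continuous_const.mul continuous_norm) continuous_const).mem_nhds hx
    filter_upwards [this] with y hy
    unfold psi
    rw [cut_eq_one hρ (le_of_lt hy), one_pow]
  rw [(pd_congr h i).eq_of_nhds]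
  simp [pd]

lemma err_point (n l : ℕ) : ∃ P : ℝ, 0 ≤ P ∧
    (∀ ρ : ℝ, 0 < ρ → ∀ x : EE n, |gg l ρ x| ≤ P ∧ |TT (psi l ρ) x| ≤ P) ∧
    ∀ u : EE n → ℝ, Sm u → ∀ ρ : ℝ, 0 < ρ → ∀ ε : ℝ, 0 < ε → ∀ x i j k,
      |p3 i j k u x * (p3 i j k (fun x => TT u x * psi l ρ x) x - p3 i j k (TT u) x * psi l ρ x)|
      ≤ 6 * n * (S3 u x * gg l ρ x) + 2 * P * ε * S3 u x +
        P / (4 * ε) * (D1 l u ρ x + D2 l u ρ x) := by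
  obtain ⟨M, hM, hb⟩ := cut_bounds n (2 * l + 6) (by omega)
  set P := 12 * n * M + (3 + 2 * n) * M with hP
  have hPn : 0 ≤ P := by rw [hP]; positivity
  have hle : ∀ ρ (x : EE n) (m : ℕ), cut ρ x ^ (2 * l + 6 + m) ≤ cut ρ x ^ (2 * l + 6) := fun ρ x m =>
    pow_le_pow_of_le_one (cut_nonneg _ _) (cut_le_one _ _) (by omega)
  have hb1 : ∀ ρ, 0 < ρ → ∀ (x : EE n) i, |pd i (psi l ρ) x| ≤ M * ρ * cut ρ x ^ (2 * l + 6) := by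
    intro ρ hρ x i
    exact ((hb ρ hρ x).1 i).trans (mul_le_mul_of_nonneg_left (hle ρ x 2) (by positivity))
  have hb2 : ∀ ρ, 0 < ρ → ∀ (x : EE n) i j,
      |pd j (pd i (psi l ρ)) x| ≤ M * ρ ^ 2 * cut ρ x ^ (2 * l + 6) := by
    intro ρ hρ x i j
    exact ((hb ρ hρ x).2.1 i j).trans (mul_le_mul_of_nonneg_left (hle ρ x 1) (by positivity))
  have hb3 : ∀ ρ, 0 < ρ → ∀ (x : EE n) i j k,
      |p3 i j k (psi l ρ) x| ≤ M * ρ ^ 3 * cut ρ x ^ (2 * l + 6) :=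
    fun ρ hρ x i j k => (hb ρ hρ x).2.2 i j k
  have hc1 : ∀ ρ (x : EE n), cut ρ x ^ (2 * l + 6) ≤ 1 := fun ρ x =>
    pow_le_one₀ (cut_nonneg _ _) (cut_le_one _ _)
  have hc0 : ∀ ρ (x : EE n), 0 ≤ cut ρ x ^ (2 * l + 6) := fun ρ x => pow_nonneg (cut_nonneg _ _) _
  have hgg0 : ∀ ρ, 0 < ρ → ∀ x : EE n, 0 ≤ gg l ρ x := fun ρ hρ x =>
    div_nonneg (Finset.sum_nonneg fun i _ => abs_nonneg _) hρ.le
  have hgg : ∀ ρ, 0 < ρ → ∀ x : EE n, gg l ρ x ≤ n * M * cut ρ x ^ (2 * l + 6) := by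
    intro ρ hρ x
    unfold gg
    rw [div_le_iff₀ hρ]
    refine (Finset.sum_le_sum fun i _ => hb1 ρ hρ x i).trans (le_of_eq ?_)
    simp; ring
  have hnM : (0:ℝ) ≤ n * M := by positivity
  refine ⟨P, hPn, fun ρ hρ x => ⟨?_, ?_⟩, fun u hu ρ hρ ε hε x i j k => ?_⟩
  · rw [abs_of_nonneg (hgg0 ρ hρ x)]
    refine (hgg ρ hρ x).trans ?_
    calc n * M * cut ρ x ^ (2 * l + 6) ≤ n * M * 1 := mul_le_mul_of_nonneg_left (hc1 ρ x) hnM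
      _ ≤ P := by rw [hP]; nlinarith
  · by_cases hx : ρ * ‖x‖ ≤ 2
    · have hr : ‖x‖ ≤ 2 / ρ := by rw [le_div_iff₀ hρ]; linarith
      refine (abs_TT_le hr (hb1 ρ hρ x)).trans ?_
      have : n * (2 / ρ) * (M * ρ * cut ρ x ^ (2 * l + 6)) = 2 * (n * M) * cut ρ x ^ (2 * l + 6) := by
        field_simp
      rw [this]
      calc 2 * (n * M) * cut ρ x ^ (2 * l + 6) ≤ 2 * (n * M) * 1 :=
            mul_le_mul_of_nonneg_left (hc1 ρ x) (by positivity)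
        _ ≤ P := by rw [hP]; nlinarith
    · have hz : cut ρ x = 0 := cut_eq_zero hρ (not_le.1 hx).le
      have : TT (psi l ρ) x = 0 := by
        unfold TT
        refine Finset.sum_eq_zero fun i _ => ?_
        have := hb1 ρ hρ x i
        rw [hz, zero_pow (by omega), mul_zero] at this
        rw [abs_nonpos_iff.1 this, mul_zero]
      rw [this]; simpa using hPn
  · have hD1 : ρ ^ 4 * S1 u x * cut ρ x ^ (2 * l + 6) ≤ D1 l u ρ x := by
      unfold D1
      rw [mul_assoc]
      refine mul_le_mul_of_nonneg_left (mul_le_mul_of_nonneg_left ?_ (S1_nonneg _ _)) (by positivity)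
      exact pow_le_pow_of_le_one (cut_nonneg _ _) (cut_le_one _ _) (by omega)
    have hD2 : ρ ^ 2 * S2 u x * cut ρ x ^ (2 * l + 6) ≤ D2 l u ρ x := by
      unfold D2
      rw [mul_assoc]
      refine mul_le_mul_of_nonneg_left (mul_le_mul_of_nonneg_left ?_ (S2_nonneg _ _)) (by positivity)
      exact pow_le_pow_of_le_one (cut_nonneg _ _) (cut_le_one _ _) (by omega)
    have hg1 : ∀ i, |pd i (psi l ρ) x| ≤ ρ * gg l ρ x := by
      intro i
      unfold gg
      rw [mul_div_cancel₀ _ hρ.ne']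
      exact Finset.single_le_sum (f := fun i => |pd i (fun x : EE n => cut ρ x ^ (2 * l + 6 + 3)) x|)
        (fun i _ => abs_nonneg _) (Finset.mem_univ i)
    by_cases hx : ρ * ‖x‖ ≤ 2
    · have hr : ‖x‖ ≤ 2 / ρ := by rw [le_div_iff₀ hρ]; linarith
      set s1 := √(S1 u x) with hs1
      set s2 := √(S2 u x) with hs2
      set s3 := √(S3 u x) with hs3
      have q1 : s1 ^ 2 = S1 u x := Real.sq_sqrt (S1_nonneg _ _)
      have q2 : s2 ^ 2 = S2 u x := Real.sq_sqrt (S2_nonneg _ _)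
      have q3 : s3 ^ 2 = S3 u x := Real.sq_sqrt (S3_nonneg _ _)
      have p1 : 0 ≤ s1 := Real.sqrt_nonneg _
      have p2 : 0 ≤ s2 := Real.sqrt_nonneg _
      have p3' : 0 ≤ s3 := Real.sqrt_nonneg _
      have m0 : |TT u x| ≤ n * (2 / ρ) * s1 := abs_TT_le hr (abs_pd_le u x)
      have m1 : ∀ i, |pd i (TT u) x| ≤ s1 + n * (2 / ρ) * s2 := by
        intro i
        rw [pd_TT hu]
        exact (abs_add_le _ _).trans (add_le_add (abs_pd_le u x i)
          (abs_TT_le hr fun j => abs_pd2_le u x i j))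
      have m2 : ∀ i j, |pd j (pd i (TT u)) x| ≤ 2 * s2 + n * (2 / ρ) * s3 := by
        intro i j
        rw [pd2_TT hu]
        refine (abs_add_le _ _).trans (add_le_add ?_ (abs_TT_le hr fun k => abs_pd3_le u x i j k))
        rw [abs_mul, abs_two]
        exact mul_le_mul_of_nonneg_left (abs_pd2_le u x i j) (by norm_num)
      have key := leibniz3_bound hu.TT (psi_sm l ρ) i j k x m0 m1 m2 hg1 (hb2 ρ hρ x) (hb3 ρ hρ x)
      rw [abs_mul]
      refine (mul_le_mul (abs_pd3_le u x i j k) key (abs_nonneg _) p3').trans ?_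
      set c := cut ρ x ^ (2 * l + 6) with hc
      have hcn : 0 ≤ c := hc0 ρ x
      set G := gg l ρ x with hG
      have hG0 : 0 ≤ G := hgg0 ρ hρ x
      have hG1 : G ≤ n * M * c := hgg ρ hρ x
      rw [← hs3]
      have e : s3 * (3 * (2 * s2 + n * (2 / ρ) * s3) * (ρ * G) +
          3 * (s1 + n * (2 / ρ) * s2) * (M * ρ ^ 2 * c) + n * (2 / ρ) * s1 * (M * ρ ^ 3 * c)) =
          6 * n * (s3 ^ 2 * G) + 6 * (ρ * s2 * s3) * G + 6 * n * M * (c * (ρ * s2 * s3))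
          + (3 + 2 * n) * M * (c * (ρ ^ 2 * s1 * s3)) := by
        field_simp; ring
      rw [e, q3]
      have t1 : 6 * (ρ * s2 * s3) * G ≤ 6 * (ρ * s2 * s3) * (n * M * c) := by gcongr
      have y1 : s3 * (ρ * s2) ≤ ε * s3 ^ 2 + 1 / (4 * ε) * (ρ * s2) ^ 2 := young hε
      have y2 : s3 * (ρ ^ 2 * s1) ≤ ε * s3 ^ 2 + 1 / (4 * ε) * (ρ ^ 2 * s1) ^ 2 := young hε
      have y : s3 * (ρ * s2) + s3 * (ρ ^ 2 * s1) ≤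
          2 * ε * S3 u x + 1 / (4 * ε) * (ρ ^ 4 * S1 u x + ρ ^ 2 * S2 u x) := by
        rw [← q1, ← q2, ← q3]
        calc _ ≤ _ := add_le_add y1 y2
          _ = _ := by ring
      have y' := mul_le_mul_of_nonneg_left y (mul_nonneg hPn hcn)
      have a1 : 0 ≤ c * (s3 * (ρ * s2)) := by positivity
      have a2 : 0 ≤ c * (s3 * (ρ ^ 2 * s1)) := by positivity
      have t2 : 12 * n * M * (c * (s3 * (ρ * s2))) + (3 + 2 * n) * M * (c * (s3 * (ρ ^ 2 * s1))) ≤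
          P * c * (s3 * (ρ * s2) + s3 * (ρ ^ 2 * s1)) := by
        have b1 : 0 ≤ (3 + 2 * n) * M * (c * (s3 * (ρ * s2))) := by positivity
        have b2 : 0 ≤ 12 * n * M * (c * (s3 * (ρ ^ 2 * s1))) := by positivity
        rw [hP]
        linarith
      have t3 : P * c * (2 * ε * S3 u x) ≤ 2 * P * ε * S3 u x := by
        have : 0 ≤ 2 * P * ε * S3 u x := by
          have := S3_nonneg u x
          positivity
        have := mul_le_mul_of_nonneg_left (hc1 ρ x) this
        linarith
      have t4 : P * c * (1 / (4 * ε) * (ρ ^ 4 * S1 u x + ρ ^ 2 * S2 u x)) ≤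
          P / (4 * ε) * (D1 l u ρ x + D2 l u ρ x) := by
        have := mul_le_mul_of_nonneg_left (add_le_add hD1 hD2) (by positivity : 0 ≤ P / (4 * ε))
        refine le_trans (le_of_eq ?_) this
        ring
      linarith
    · have hz : cut ρ x = 0 := cut_eq_zero hρ (not_le.1 hx).le
      have z1 : ∀ i, |pd i (psi l ρ) x| ≤ 0 := fun i => by
        have := hb1 ρ hρ x i
        rwa [hz, zero_pow (by omega), mul_zero] at this
      have z2 : ∀ i j, |pd j (pd i (psi l ρ)) x| ≤ 0 := fun i j => by
        have := hb2 ρ hρ x i j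
        rwa [hz, zero_pow (by omega), mul_zero] at this
      have z3 : ∀ i j k, |p3 i j k (psi l ρ) x| ≤ 0 := fun i j k => by
        have := hb3 ρ hρ x i j k
        rwa [hz, zero_pow (by omega), mul_zero] at this
      have key := leibniz3_bound hu.TT (psi_sm l ρ) i j k x le_rfl (abs_pd_le _ x)
        (abs_pd2_le _ x) z1 z2 z3
      simp only [mul_zero, add_zero] at key
      rw [abs_nonpos_iff.1 key, mul_zero, abs_zero]
      have := S3_nonneg u x
      have := hgg0 ρ hρ x
      have := D1_nonneg l u ρ x
      have := D2_nonneg l u ρ x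
      positivity
/-- commutator error -/
def err (l : ℕ) (u : EE n → ℝ) (ρ : ℝ) (i j k : Fin n) (x : EE n) : ℝ :=
  p3 i j k u x * (p3 i j k (fun x => TT u x * psi l ρ x) x - p3 i j k (TT u) x * psi l ρ x)

lemma err_int (l : ℕ) {u : EE n → ℝ} (hu : Sm u) {ρ : ℝ} (hρ : 0 < ρ) (i j k : Fin n) :
    Integrable (err l u ρ i j k) := by
  have hT : Sm (fun x => TT u x * psi l ρ x) := hu.TT.mul (psi_sm l ρ)
  have hTc : HasCompactSupport (fun x => TT u x * psi l ρ x) := (psi_cs l hρ).mul_left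
  have i1 : Integrable (fun x => p3 i j k u x * p3 i j k (fun x => TT u x * psi l ρ x) x) :=
    int_cs ((hu.p3 i j k).cont.mul (hT.p3 i j k).cont) (cs_p3 hTc i j k).mul_left
  have i2 : Integrable (fun x => p3 i j k u x * (p3 i j k (TT u) x * psi l ρ x)) :=
    int_cs ((hu.p3 i j k).cont.mul ((hu.TT.p3 i j k).cont.mul (psi_sm l ρ).cont))
      ((psi_cs l hρ).mul_left).mul_left
  refine (i1.sub i2).congr (Eventually.of_forall fun x => ?_)
  simp only [err, Pi.sub_apply]
  ring

lemma pohoz {p : ℝ} (hp : 1 < p) (l : ℕ) {u : EE n → ℝ} (hu : Sm u)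
    (heq : ∀ x, laplacian (laplacian (laplacian u)) x = -(|u x| ^ (p - 1) * u x))
    {ρ : ℝ} (hρ : 0 < ρ) :
    -(1 / (p + 1)) * (n * (∫ x, FF p u x * psi l ρ x) + ∫ x, FF p u x * TT (psi l ρ) x) =
    3 * (∫ x, S3 u x * psi l ρ x) -
      (1 / 2) * (n * (∫ x, S3 u x * psi l ρ x) + ∫ x, S3 u x * TT (psi l ρ) x) +
      ∫ x, ∑ i, ∑ j, ∑ k, err l u ρ i j k x := by
  have hψ := psi_sm (n := n) l ρ
  have hc := psi_cs (n := n) l hρ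
  have hT : Sm (fun x => TT u x * psi l ρ x) := hu.TT.mul hψ
  have hTc : HasCompactSupport (fun x => TT u x * psi l ρ x) := hc.mul_left
  have hw := weak hu heq hT hTc
  have hl : ∫ x, |u x| ^ (p - 1) * u x * (TT u x * psi l ρ x) =
      -(1 / (p + 1)) * (n * (∫ x, FF p u x * psi l ρ x) + ∫ x, FF p u x * TT (psi l ρ) x) := by
    have h := TT_ibp (FF_c1 hp hu) hψ hc
    simp only [TT_FF hp hu] at h
    have e : ∀ x, |u x| ^ (p - 1) * u x * (TT u x * psi l ρ x) =
        (1 / (p + 1)) * ((p + 1) * (|u x| ^ (p - 1) * u x * TT u x) * psi l ρ x) := by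
      intro x
      have : p + 1 ≠ 0 := by linarith
      field_simp
    simp only [e]
    rw [integral_const_mul, h]; ring
  rw [← hl, hw]
  have cTψ : HasCompactSupport (TT (psi l ρ) : EE n → ℝ) := by
    refine HasCompactSupport.intro (isCompact_closedBall (0 : EE n) (2 / ρ)) fun x hx => ?_
    unfold TT
    refine Finset.sum_eq_zero fun i _ => ?_
    have : x ∉ tsupport (psi l ρ) := by
      intro h
      have hsub : tsupport (psi l ρ : EE n → ℝ) ⊆ Metric.closedBall 0 (2 / ρ) := by
        refine closure_minimal (fun y hy => ?_) Metric.isClosed_closedBall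
        by_contra hy2
        apply hy
        have : 2 / ρ < ‖y‖ := by simpa using hy2
        rw [div_lt_iff₀ hρ] at this
        unfold psi
        rw [cut_eq_zero hρ (by linarith), zero_pow (by omega)]
      exact hx (hsub h)
    have h2 : pd i (psi l ρ) x = 0 := by
      rw [notMem_tsupport_iff_eventuallyEq] at this
      rw [(pd_congr this i).eq_of_nhds]
      simp [pd]
    rw [h2, mul_zero]
  have key : ∀ i j k, ∫ x, p3 i j k u x * p3 i j k (fun x => TT u x * psi l ρ x) x =
      (3 - 1 / 2 * n) * (∫ x, p3 i j k u x ^ 2 * psi l ρ x) +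
      (-(1 / 2)) * (∫ x, p3 i j k u x ^ 2 * TT (psi l ρ) x) + ∫ x, err l u ρ i j k x := by
    intro i j k
    have hq := hu.p3 i j k
    have i1 : Integrable (fun x => p3 i j k u x ^ 2 * psi l ρ x) :=
      int_cs ((hq.cont.pow 2).mul hψ.cont) hc.mul_left
    have i2 : Integrable (fun x => p3 i j k u x * TT (p3 i j k u) x * psi l ρ x) :=
      int_cs ((hq.cont.mul hq.TT.cont).mul hψ.cont) hc.mul_left
    have h3 := (int_lin3 i1 i2 (err_int l hu hρ i j k) 3 1 1).2
    have e : ∀ x, p3 i j k u x * p3 i j k (fun x => TT u x * psi l ρ x) x =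
        3 * (p3 i j k u x ^ 2 * psi l ρ x) + 1 * (p3 i j k u x * TT (p3 i j k u) x * psi l ρ x)
        + 1 * err l u ρ i j k x := by
      intro x
      unfold err
      rw [p3_TT hu]; ring
    simp only [e]
    rw [h3, TT_sq_ibp hq hψ hc]; ring
  have s1 : ∫ x, S3 u x * psi l ρ x = ∑ i, ∑ j, ∑ k, ∫ x, p3 i j k u x ^ 2 * psi l ρ x := by
    rw [← integral_sum3 fun i j k =>
      (int_cs (((hu.p3 i j k).cont.pow 2).mul hψ.cont) hc.mul_left :
        Integrable (fun x => p3 i j k u x ^ 2 * psi l ρ x))]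
    congr 1; ext x
    simp only [S3_eq, Finset.sum_mul]
  have s2 : ∫ x, S3 u x * TT (psi l ρ) x =
      ∑ i, ∑ j, ∑ k, ∫ x, p3 i j k u x ^ 2 * TT (psi l ρ) x := by
    rw [← integral_sum3 fun i j k =>
      (int_cs (((hu.p3 i j k).cont.pow 2).mul hψ.TT.cont) cTψ.mul_left :
        Integrable (fun x => p3 i j k u x ^ 2 * TT (psi l ρ) x))]
    congr 1; ext x
    simp only [S3_eq, Finset.sum_mul]
  rw [integral_sum3 fun i j k => err_int l hu hρ i j k, s1, s2]
  simp only [key, Finset.sum_add_distrib, ← Finset.mul_sum]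
  ring

lemma err_tendsto {l : ℕ} (hl : 1 ≤ l) {u : EE n → ℝ} (hu : Sm u) (hS : Integrable (S3 u))
    (hA : Tendsto (fun ρ => A1 l u ρ + A2 l u ρ) (nhdsWithin (0:ℝ) (Set.Ioi 0)) (nhds 0)) :
    Tendsto (fun ρ => ∫ x, ∑ i, ∑ j, ∑ k, err l u ρ i j k x)
      (nhdsWithin (0:ℝ) (Set.Ioi 0)) (nhds 0) := by
  obtain ⟨P, hP, hb, h⟩ := err_point n l
  have hggc : ∀ ρ, Continuous (gg l ρ : EE n → ℝ) := fun ρ =>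
    (continuous_finsetSum _ fun i _ => ((psi_sm l ρ).pd i).cont.abs).div_const ρ
  have hgt : Tendsto (fun ρ => ∫ x, S3 u x * gg l ρ x) (nhdsWithin (0:ℝ) (Set.Ioi 0)) (nhds 0) := by
    have := dct hS (g := fun ρ x => gg l ρ x) (a := 0) (M := P) (fun ρ _ => hggc ρ)
      (fun ρ hρ x => (hb ρ hρ x).1) (fun ρ hρ x hx => by
        unfold gg
        rw [Finset.sum_eq_zero, zero_div]
        intro i _
        rw [abs_eq_zero]
        exact psi_pd_zero l hρ hx i)
    simpa using this
  have hI : 0 ≤ ∫ x, S3 u x := integral_nonneg fun x => S3_nonneg u x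
  rw [tendsto_zero_iff_abs_tendsto_zero]
  refine tendsto_of_eps (B := n ^ 3 * (2 * P * ∫ x, S3 u x))
    (Eventually.of_forall fun ρ => abs_nonneg _) (by positivity) fun ε hε => ?_
  refine ⟨fun ρ => n ^ 3 * (6 * n * (∫ x, S3 u x * gg l ρ x) +
    P / (4 * ε) * (A1 l u ρ + A2 l u ρ)), ?_, ?_⟩
  · simpa using ((hgt.const_mul (6 * (n:ℝ))).add (hA.const_mul (P / (4 * ε)))).const_mul ((n:ℝ) ^ 3)
  · filter_upwards [self_mem_nhdsWithin] with ρ hρ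
    have hρ' : 0 < ρ := hρ
    have i1 : Integrable (fun x => S3 u x * gg l ρ x) := by
      refine hS.mul_bdd (c := P) (hggc ρ).aestronglyMeasurable (Eventually.of_forall fun x => ?_)
      exact (hb ρ hρ' x).1
    have i2 := int_lin2 (D1_int hl hu hρ') (D2_int hl hu hρ') 1 1
    have i3 := int_lin3 i1 hS i2.1 (n ^ 3 * (6 * n)) (n ^ 3 * (2 * P * ε)) (n ^ 3 * (P / (4 * ε)))
    simp only [Function.comp]
    refine (abs_integral_le_integral_abs).trans ?_
    refine (integral_mono (integrable_sum3 fun i j k => err_int l hu hρ' i j k).abs i3.1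
      fun x => ?_).trans (le_of_eq ?_)
    · refine le_trans ?_ (le_of_eq ((sum3_const n (6 * n * (S3 u x * gg l ρ x) +
        2 * P * ε * S3 u x + P / (4 * ε) * (D1 l u ρ x + D2 l u ρ x))).trans (by ring)))
      refine le_trans ?_ (sum3_le fun i j k => h u hu ρ hρ' ε hε x i j k)
      refine (Finset.abs_sum_le_sum_abs _ _).trans (Finset.sum_le_sum fun i _ => ?_)
      refine (Finset.abs_sum_le_sum_abs _ _).trans (Finset.sum_le_sum fun j _ => ?_)
      exact Finset.abs_sum_le_sum_abs _ _
    · rw [i3.2, i2.2]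
      unfold A1 A2
      ring

lemma main_result {p : ℝ} (hn : 7 ≤ n) (hp : 1 < p) (hp2 : p < ((n : ℝ) + 6) / ((n : ℝ) - 6))
    {u : EE n → ℝ} (hu : Sm u)
    (heq : ∀ x, laplacian (laplacian (laplacian u)) x = -(|u x| ^ (p - 1) * u x))
    {Θ : Set (EE n)} (hΘ : IsCompact Θ)
    (hstab : ∀ φ : EuclideanSpace ℝ (Fin n) → ℝ, ContDiff ℝ (⊤ : ℕ∞) φ →
      HasCompactSupport φ → tsupport φ ⊆ Θᶜ →
      p * (∫ x, |u x| ^ (p - 1) * φ x ^ 2) ≤ ∫ x, ‖gradient (laplacian φ) x‖ ^ 2) :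
    u = 0 := by
  have hn' : (7:ℝ) ≤ n := by exact_mod_cast hn
  have hp' : 0 < p - 1 := by linarith
  have hs : p * (n - 6) < n + 6 := by rwa [lt_div_iff₀ (by linarith)] at hp2
  have hd : 0 < 6 + 12 / (p - 1) - n := by
    have : n - 6 < 12 / (p - 1) := by
      rw [lt_div_iff₀ hp']; nlinarith
    linarith
  obtain ⟨m, hm⟩ := exists_nat_ge (12 / (p - 1))
  set l := m + 1 with hl
  have hl1 : 1 ≤ l := by omega
  have hlp : 12 / (p - 1) ≤ 2 * l := by
    rw [hl]; push_cast
    have : (0:ℝ) ≤ m := Nat.cast_nonneg m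
    linarith
  obtain ⟨iF, iS, hFS, hA⟩ := energy hp (by omega) hd hl1 hlp hu heq hΘ hstab
  have he := err_tendsto hl1 hu iS hA
  obtain ⟨P, hP, hb, -⟩ := err_point n l
  have tT : ∀ f : EE n → ℝ, Integrable f → Tendsto (fun ρ => ∫ x, f x * TT (psi l ρ) x)
      (nhdsWithin (0:ℝ) (Set.Ioi 0)) (nhds 0) := by
    intro f hf
    have := dct hf (g := fun ρ x => TT (psi l ρ) x) (a := 0) (M := P)
      (fun ρ _ => (psi_sm l ρ).TT.cont)
      (fun ρ hρ x => (hb ρ hρ x).2) (fun ρ hρ x hx => by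
        unfold TT
        refine Finset.sum_eq_zero fun i _ => ?_
        rw [psi_pd_zero l hρ hx i, mul_zero])
    simpa using this
  have tF : Tendsto (fun ρ => ∫ x, FF p u x * psi l ρ x) (nhdsWithin (0:ℝ) (Set.Ioi 0))
    (nhds (∫ x, FF p u x)) := dct_cut iF _
  have tS : Tendsto (fun ρ => ∫ x, S3 u x * psi l ρ x) (nhdsWithin (0:ℝ) (Set.Ioi 0))
    (nhds (∫ x, S3 u x)) := dct_cut iS _
  have tL := ((tF.const_mul (n:ℝ)).add (tT _ iF)).const_mul (-(1 / (p + 1)))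
  have tR := ((tS.const_mul 3).sub (((tS.const_mul (n:ℝ)).add (tT _ iS)).const_mul (1 / 2))).add he
  have hE : (fun ρ => -(1 / (p + 1)) * (n * (∫ x, FF p u x * psi l ρ x) +
      ∫ x, FF p u x * TT (psi l ρ) x)) =ᶠ[nhdsWithin (0:ℝ) (Set.Ioi 0)]
    (fun ρ => 3 * (∫ x, S3 u x * psi l ρ x) -
      (1 / 2) * (n * (∫ x, S3 u x * psi l ρ x) + ∫ x, S3 u x * TT (psi l ρ) x) +
      ∫ x, ∑ i, ∑ j, ∑ k, err l u ρ i j k x) := by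
    filter_upwards [self_mem_nhdsWithin] with ρ hρ
    exact pohoz hp l hu heq hρ
  have hfin := tendsto_nhds_unique_of_eventuallyEq tL tR hE
  rw [← hFS] at hfin
  set I := ∫ x, FF p u x with hI
  have hc : (n : ℝ) / (p + 1) - (n - 6) / 2 ≠ 0 := by
    apply ne_of_gt
    rw [sub_pos, div_lt_div_iff₀ (by norm_num) (by linarith)]
    nlinarith
  have hz : ((n : ℝ) / (p + 1) - (n - 6) / 2) * I = 0 := by
    have : (n : ℝ) / (p + 1) = n * (1 / (p + 1)) := by ring
    rw [this]
    linarith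
  have hI0 : I = 0 := (mul_eq_zero.1 hz).resolve_left hc
  have h0 := (integral_eq_zero_iff_of_nonneg (FF_nonneg p u) iF).1 hI0
  have h1 : FF p u = 0 := ((FF_cont hp hu).ae_eq_iff_eq volume continuous_zero).1 h0
  funext x
  have := congrFun h1 x
  simp only [FF, Pi.zero_apply] at this ⊢
  rw [Real.rpow_eq_zero (abs_nonneg _) (by linarith)] at this
  exact abs_eq_zero.1 this

end Triharm

/-- **Theorem 1.2(1) (subcritical case).** Let `n ≥ 7` and let `u` be a smooth solution of
`(-Δ)³ u = |u|^{p-1} u` on `ℝⁿ` that is stable outside a compact set `Θ`. If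
`1 < p < (n+6)/(n-6)`, then `u ≡ 0`. -/
theorem triharmonic_finiteMorse_subcritical (n : ℕ) (hn : 7 ≤ n) (p : ℝ) (hp1 : 1 < p)
    (hp2 : p < ((n : ℝ) + 6) / ((n : ℝ) - 6))
    (u : EuclideanSpace ℝ (Fin n) → ℝ) (hu : ContDiff ℝ (⊤ : ℕ∞) u)
    (heq : ∀ x, laplacian (laplacian (laplacian u)) x = -(|u x| ^ (p - 1) * u x))
    (Θ : Set (EuclideanSpace ℝ (Fin n))) (hΘ : IsCompact Θ)
    (hstab : ∀ φ : EuclideanSpace ℝ (Fin n) → ℝ, ContDiff ℝ (⊤ : ℕ∞) φ →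
      HasCompactSupport φ → tsupport φ ⊆ Θᶜ →
      p * (∫ x, |u x| ^ (p - 1) * φ x ^ 2) ≤ ∫ x, ‖gradient (laplacian φ) x‖ ^ 2) :
    u = 0 := by
  exact Triharm.main_result hn hp1 hp2 hu heq hΘ hstab
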